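/- arXiv:1504.04723 — 11 statements merged into one kernel-verified Lean document; each statement's English description precedes it below -/
import Mathlib

section
/- Let ν₁ > 0, ν₂ > 0, h > 0 and set σ = ν₂/ν₁, b = 1/ν₁, a = −ν₂²/h², r = h²/(ν₁ν₂). If X, Y, Z : ℝ → ℝ are differentiable functions satisfying the generalized Lorenz system X' = −σ(X − Y) − a·Y·Z, Y' = r·X − Y − X·Z, Z' = −b·Z + X·Y, then the functions x(t) = ν₁ν₂h⁻¹·Y(ν₁t), y(t) = ν₁·X(ν₁t), z(t) = ν₁ν₂h⁻¹·Z(ν₁t) satisfy the Rabinovich system x' = h·y − ν₁·x − y·z, y' = h·x − ν₂·y + x·z, z' = −z + x·y. -/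
/-!
Up to the time change `t ↦ ν₁ t`, the linear map `(X, Y, Z) ↦ (k Y, ν₁ X, k Z)` with
`k = ν₁ ν₂ / h` conjugates the generalized Lorenz vector field to the Rabinovich vector field.
A linear map carrying one vector field to another carries trajectories to trajectories.
-/

section LinearSemiconjugacy

variable {𝕜 E F : Type*} [NontriviallyNormedField 𝕜]
  [NormedAddCommGroup E] [NormedSpace 𝕜 E] [NormedAddCommGroup F] [NormedSpace 𝕜 F]

theorem hasDerivAt_prodMk_iff {f : 𝕜 → E} {g : 𝕜 → F} {f' : E} {g' : F} {t : 𝕜} :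
    HasDerivAt (fun s => (f s, g s)) (f', g') t ↔ HasDerivAt f f' t ∧ HasDerivAt g g' t where
  mp hfg := ⟨(ContinuousLinearMap.fst 𝕜 E F).hasFDerivAt.comp_hasDerivAt t hfg,
    (ContinuousLinearMap.snd 𝕜 E F).hasFDerivAt.comp_hasDerivAt t hfg⟩
  mpr hfg := hfg.1.prodMk hfg.2

theorem hasDerivAt_clm_comp_mul_left_of_semiconj {L : E →L[𝕜] F} {v : E → E} {w : F → F}
    {c t : 𝕜} {γ : 𝕜 → E} (hL : Function.Semiconj L (c • v) w)
    (hγ : HasDerivAt γ (v (γ (c * t))) (c * t)) :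
    HasDerivAt (fun s => L (γ (c * s))) (w (L (γ (c * t)))) t := by
  have rescaled : HasDerivAt (fun s => γ (c * s)) (c • v (γ (c * t))) t :=
    hγ.scomp t (hasDerivAt_const_mul c)
  exact (L.hasFDerivAt.comp_hasDerivAt t rescaled).congr_deriv (hL _)

end LinearSemiconjugacy

section VectorFields

variable {𝕜 : Type*}

/-- The right-hand side of the generalized Lorenz system, as a vector field on triples
`(X, Y, Z)`. -/
def generalizedLorenzField [Ring 𝕜] (σ a b r : 𝕜) : 𝕜 × 𝕜 × 𝕜 → 𝕜 × 𝕜 × 𝕜 :=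
  fun (X, Y, Z) => (-σ * (X - Y) - a * Y * Z, r * X - Y - X * Z, -b * Z + X * Y)

/-- The right-hand side of the Rabinovich system, as a vector field on triples `(x, y, z)`. -/
def rabinovichField [Ring 𝕜] (ν₁ ν₂ h : 𝕜) : 𝕜 × 𝕜 × 𝕜 → 𝕜 × 𝕜 × 𝕜 :=
  fun (x, y, z) => (h * y - ν₁ * x - y * z, h * x - ν₂ * y + x * z, -z + x * y)

variable [NontriviallyNormedField 𝕜]

/-- The linear change of variables taking generalized Lorenz coordinates to Rabinovich
coordinates; note that it exchanges the roles of the first two coordinates. -/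
def lorenzToRabinovich (ν₁ ν₂ h : 𝕜) : 𝕜 × 𝕜 × 𝕜 →L[𝕜] 𝕜 × 𝕜 × 𝕜 where
  toFun := fun (X, Y, Z) => (ν₁ * ν₂ * h⁻¹ * Y, ν₁ * X, ν₁ * ν₂ * h⁻¹ * Z)
  map_add' _ _ := by simp [mul_add]
  map_smul' _ _ := by simp [mul_left_comm]
  cont := by fun_prop

theorem lorenzToRabinovich_apply (ν₁ ν₂ h X Y Z : 𝕜) :
    lorenzToRabinovich ν₁ ν₂ h (X, Y, Z) = (ν₁ * ν₂ * h⁻¹ * Y, ν₁ * X, ν₁ * ν₂ * h⁻¹ * Z) :=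
  rfl

theorem semiconj_lorenzToRabinovich {ν₁ ν₂ h : 𝕜} (hν₁ : ν₁ ≠ 0) (hν₂ : ν₂ ≠ 0) (hh : h ≠ 0) :
    Function.Semiconj (lorenzToRabinovich ν₁ ν₂ h)
      (ν₁ • generalizedLorenzField (ν₂ / ν₁) (-ν₂ ^ 2 / h ^ 2) (1 / ν₁) (h ^ 2 / (ν₁ * ν₂)))
      (rabinovichField ν₁ ν₂ h) := by
  rintro ⟨X, Y, Z⟩
  refine Prod.ext ?_ (Prod.ext ?_ ?_)
  · change ν₁ * ν₂ * h⁻¹ * (ν₁ * (h ^ 2 / (ν₁ * ν₂) * X - Y - X * Z)) =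
      h * (ν₁ * X) - ν₁ * (ν₁ * ν₂ * h⁻¹ * Y) - ν₁ * X * (ν₁ * ν₂ * h⁻¹ * Z)
    field_simp
  · change ν₁ * (ν₁ * (-(ν₂ / ν₁) * (X - Y) - -ν₂ ^ 2 / h ^ 2 * Y * Z)) =
      h * (ν₁ * ν₂ * h⁻¹ * Y) - ν₂ * (ν₁ * X) + ν₁ * ν₂ * h⁻¹ * Y * (ν₁ * ν₂ * h⁻¹ * Z)
    field_simp
    ring
  · change ν₁ * ν₂ * h⁻¹ * (ν₁ * (-(1 / ν₁) * Z + X * Y)) =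
      -(ν₁ * ν₂ * h⁻¹ * Z) + ν₁ * ν₂ * h⁻¹ * Y * (ν₁ * X)
    field_simp

theorem rabinovich_from_generalized_lorenz_general {ν₁ ν₂ h : 𝕜}
    (hν₁ : ν₁ ≠ 0) (hν₂ : ν₂ ≠ 0) (hh : h ≠ 0) {γ : 𝕜 → 𝕜 × 𝕜 × 𝕜} {t : 𝕜}
    (hγ : HasDerivAt γ
      (generalizedLorenzField (ν₂ / ν₁) (-ν₂ ^ 2 / h ^ 2) (1 / ν₁) (h ^ 2 / (ν₁ * ν₂))
        (γ (ν₁ * t))) (ν₁ * t)) :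
    HasDerivAt (fun s => lorenzToRabinovich ν₁ ν₂ h (γ (ν₁ * s)))
      (rabinovichField ν₁ ν₂ h (lorenzToRabinovich ν₁ ν₂ h (γ (ν₁ * t)))) t :=
  hasDerivAt_clm_comp_mul_left_of_semiconj (semiconj_lorenzToRabinovich hν₁ hν₂ hh) hγ

end VectorFields

/-- the linear transformation carries solutions of the generalized
Lorenz system to solutions of the Rabinovich system. -/
theorem rabinovich_from_generalized_lorenz
    (ν₁ ν₂ h : ℝ) (hν₁ : 0 < ν₁) (hν₂ : 0 < ν₂) (hh : 0 < h)
    (σ a b r : ℝ)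
    (hσ : σ = ν₂ / ν₁) (hb : b = 1 / ν₁) (ha : a = -ν₂ ^ 2 / h ^ 2)
    (hr : r = h ^ 2 / (ν₁ * ν₂))
    (X Y Z : ℝ → ℝ)
    (hX : Differentiable ℝ X) (hY : Differentiable ℝ Y) (hZ : Differentiable ℝ Z)
    (hX' : ∀ t, deriv X t = -σ * (X t - Y t) - a * Y t * Z t)
    (hY' : ∀ t, deriv Y t = r * X t - Y t - X t * Z t)
    (hZ' : ∀ t, deriv Z t = -b * Z t + X t * Y t)
    (x y z : ℝ → ℝ)
    (hx : x = fun t => ν₁ * ν₂ * h⁻¹ * Y (ν₁ * t))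
    (hy : y = fun t => ν₁ * X (ν₁ * t))
    (hz : z = fun t => ν₁ * ν₂ * h⁻¹ * Z (ν₁ * t)) :
    (∀ t, deriv x t = h * y t - ν₁ * x t - y t * z t) ∧
    (∀ t, deriv y t = h * x t - ν₂ * y t + x t * z t) ∧
    (∀ t, deriv z t = -z t + x t * y t) := by
  have lorenz (t : ℝ) : HasDerivAt (fun s => (X s, Y s, Z s))
      (generalizedLorenzField σ a b r (X t, Y t, Z t)) t :=
    ((hX t).hasDerivAt.congr_deriv (hX' t)).prodMk
      (((hY t).hasDerivAt.congr_deriv (hY' t)).prodMk ((hZ t).hasDerivAt.congr_deriv (hZ' t)))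
  subst hσ hb ha hr hx hy hz
  have rabinovich (t : ℝ) :=
    rabinovich_from_generalized_lorenz_general hν₁.ne' hν₂.ne' hh.ne' (lorenz (ν₁ * t))
  simp only [lorenzToRabinovich_apply, rabinovichField, hasDerivAt_prodMk_iff] at rabinovich
  exact ⟨fun t => (rabinovich t).1.deriv, fun t => (rabinovich t).2.1.deriv,
    fun t => (rabinovich t).2.2.deriv⟩
end

section
/- Let a < 0, b > 0, 0 < r < 1 and σ = −a·r. Then the only solution (x, y, z) ∈ ℝ³ of the system of equations −σ(x − y) − a·y·z = 0, r·x − y − x·z = 0, −b·z + x·y = 0 is (x, y, z) = (0, 0, 0). -/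
/-!
Write `σ = -a * r` with `a ≠ 0` and `r ≠ 0`. At an equilibrium the second equation reads
`y = x * (r - z)`, and the first becomes `r * x = (r + z) * y`. If `x ≠ 0`, then
`(r + z) * (r - z) = r`, that is, `z ^ 2 = r * (r - 1)`. Multiplying the third equation,
`x ^ 2 * (r - z) = b * z`, by `r + z` and cancelling `r` gives `x ^ 2 = b * (z + r - 1)`.
For `r ≤ 1` these two squares are incompatible with `x ≠ 0` unless `b` and `r` are both negative:
if `0 < r`, the first forces `z = 0` and `r = 1`, so that the second is `x ^ 2 = 0`; if `0 < b`, the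
second gives `z > 1 - r ≥ 0`, so that `z ^ 2 > (1 - r) ^ 2 ≥ r * (r - 1)`.
-/

/-- `(x, y, z)` is an equilibrium of the generalized Lorenz (Rabinovich) system with parameters
`a`, `b`, `r`, `σ`: the three components of the vector field vanish there. The parameter `σ` is
independent of the others here; the Rabinovich relation is imposed by taking `σ = -a * r`. -/
structure IsRabinovichEquilibrium {R : Type*} [CommRing R] (a b r σ x y z : R) : Prop where
  xdot_eq_zero : -σ * (x - y) - a * y * z = 0
  ydot_eq_zero : r * x - y - x * z = 0
  zdot_eq_zero : -b * z + x * y = 0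

namespace IsRabinovichEquilibrium

section CommRing

variable {R : Type*} [CommRing R] {a b r σ x y z : R}

theorem y_eq (h : IsRabinovichEquilibrium a b r σ x y z) : y = x * (r - z) := by
  linear_combination -h.ydot_eq_zero

variable [NoZeroDivisors R]

theorem y_eq_zero_and_z_eq_zero (h : IsRabinovichEquilibrium a b r σ x y z) (hb : b ≠ 0)
    (hx : x = 0) : y = 0 ∧ z = 0 := by
  have hy : y = 0 := by rw [h.y_eq, hx, zero_mul]
  have hbz : b * z = 0 := by linear_combination x * hy - h.zdot_eq_zero
  exact ⟨hy, (mul_eq_zero.mp hbz).resolve_left hb⟩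

theorem r_mul_x_eq (h : IsRabinovichEquilibrium a b r (-a * r) x y z) (ha : a ≠ 0) :
    r * x = (r + z) * y :=
  mul_left_cancel₀ ha (by linear_combination h.xdot_eq_zero)

theorem z_sq_eq (h : IsRabinovichEquilibrium a b r (-a * r) x y z) (ha : a ≠ 0) (hx : x ≠ 0) :
    z ^ 2 = r * (r - 1) := by
  have hxr : x * r = x * ((r + z) * (r - z)) := by
    linear_combination h.r_mul_x_eq ha + (r + z) * h.y_eq
  linear_combination mul_left_cancel₀ hx hxr

theorem x_sq_eq (h : IsRabinovichEquilibrium a b r (-a * r) x y z) (ha : a ≠ 0) (hr : r ≠ 0)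
    (hx : x ≠ 0) : x ^ 2 = b * (z + r - 1) := by
  refine mul_left_cancel₀ hr ?_
  calc r * x ^ 2 = (r + z) * (x * y) := by linear_combination x * h.r_mul_x_eq ha
    _ = b * (r * z + z ^ 2) := by linear_combination (r + z) * h.zdot_eq_zero
    _ = r * (b * (z + r - 1)) := by rw [h.z_sq_eq ha hx]; ring

end CommRing

section LinearOrder

variable {R : Type*} [CommRing R] [LinearOrder R] [IsStrictOrderedRing R] {a b r x y z : R}

theorem x_eq_zero_of_r_pos (h : IsRabinovichEquilibrium a b r (-a * r) x y z) (ha : a ≠ 0)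
    (hr0 : 0 < r) (hr1 : r ≤ 1) : x = 0 := by
  by_contra hx
  have hz_sq : z ^ 2 = r * (r - 1) := h.z_sq_eq ha hx
  have hz : z = 0 := by
    have hz_nonpos : z ^ 2 ≤ 0 :=
      hz_sq ▸ mul_nonpos_of_nonneg_of_nonpos hr0.le (sub_nonpos.mpr hr1)
    exact (sq_nonpos_iff z).mp hz_nonpos
  have hr : r - 1 = 0 :=
    (mul_eq_zero.mp (hz_sq.symm.trans (by simp [hz]))).resolve_left hr0.ne'
  have hx_sq : x ^ 2 = 0 := by
    linear_combination h.x_sq_eq ha hr0.ne' hx + b * hz + b * hr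
  exact hx (sq_eq_zero_iff.mp hx_sq)

theorem x_eq_zero_of_b_pos (h : IsRabinovichEquilibrium a b r (-a * r) x y z) (ha : a ≠ 0)
    (hb : 0 < b) (hr : r ≠ 0) (hr1 : r ≤ 1) : x = 0 := by
  by_contra hx
  have hbz : 0 < b * (z + r - 1) := h.x_sq_eq ha hr hx ▸ sq_pos_of_ne_zero hx
  have hz : 1 - r < z := by linarith [pos_of_mul_pos_right hbz hb.le]
  have hz_sq : (1 - r) ^ 2 < z ^ 2 := pow_lt_pow_left₀ hz (sub_nonneg.mpr hr1) two_ne_zero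
  linarith [h.z_sq_eq ha hx]

end LinearOrder

end IsRabinovichEquilibrium

theorem unique_equilibrium_of_r_lt_one_general {R : Type*} [CommRing R] [LinearOrder R]
    [IsStrictOrderedRing R] {a b r x y z : R} (ha : a ≠ 0) (hb : b ≠ 0) (hr : r ≠ 0) (hr1 : r ≤ 1)
    (hbr : 0 < b ∨ 0 < r) (h : IsRabinovichEquilibrium a b r (-a * r) x y z) :
    x = 0 ∧ y = 0 ∧ z = 0 := by
  have hx : x = 0 := hbr.elim
    (fun hb0 => h.x_eq_zero_of_b_pos ha hb0 hr hr1)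
    (fun hr0 => h.x_eq_zero_of_r_pos ha hr0 hr1)
  exact ⟨hx, h.y_eq_zero_and_z_eq_zero hb hx⟩

/-- for 0 < r < 1 the origin is the unique equilibrium. -/
theorem unique_equilibrium_of_r_lt_one
    (a b r σ : ℝ) (ha : a < 0) (hb : 0 < b) (hr0 : 0 < r) (hr1 : r < 1)
    (hσ : σ = -a * r) (x y z : ℝ)
    (h1 : -σ * (x - y) - a * y * z = 0)
    (h2 : r * x - y - x * z = 0)
    (h3 : -b * z + x * y = 0) :
    x = 0 ∧ y = 0 ∧ z = 0 := by
  subst hσ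
  exact unique_equilibrium_of_r_lt_one_general ha.ne hb.ne' hr0.ne' hr1.le (.inl hb) ⟨h1, h2, h3⟩
end

section
/- Let a < 0, b > 0, r > 1, σ = −a·r, ξ = (σ·b/(2·a²))·(a·(r − 2) − σ + √((σ − a·r)² + 4·a·σ)), x₁ = σ·b·√ξ/(σ·b + a·ξ), y₁ = √ξ, z₁ = σ·ξ/(σ·b + a·ξ). Then the points S₊ = (x₁, y₁, z₁) and S₋ = (−x₁, −y₁, z₁) are equilibria of the generalized Lorenz system, i.e. they satisfy −σ(x − y) − a·y·z = 0, r·x − y − x·z = 0, −b·z + x·y = 0. -/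
/-!
The first and third equilibrium equations express `x` and `z` as rational functions of `y` with
denominator `σ * b + a * y ^ 2`. Substituting them into the second one and dividing by `y` leaves a
quadratic equation for `y ^ 2`, of which `ξ` is a root; the denominator cannot vanish at a root. For
`1 ≤ r` the product of the two roots, `-(σ * b / a) ^ 2 * (r - 1)`, is nonpositive, so the larger
one, which is `ξ` when `0 < σ * b`, is nonnegative.
-/

namespace GeneralizedLorenz

section CommRing

variable {K : Type*} [CommRing K]

/-- The point `(x, y, z)` is an equilibrium of the generalized Lorenz system, that is, a common zero
of the three components of its vector field. -/
def IsEquilibrium (a b r σ x y z : K) : Prop :=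
  -σ * (x - y) - a * y * z = 0 ∧ r * x - y - x * z = 0 ∧ -b * z + x * y = 0

theorem IsEquilibrium.neg {a b r σ x y z : K} (h : IsEquilibrium a b r σ x y z) :
    IsEquilibrium a b r σ (-x) (-y) z := by
  obtain ⟨hx, hy, hz⟩ := h
  exact ⟨by linear_combination -hx, by linear_combination -hy, by linear_combination hz⟩

/-- The quadratic polynomial with root `y ^ 2` at an equilibrium with `y ≠ 0`, evaluated at `ξ`.
It is written in the shape expected by `quadratic_eq_zero_iff`. -/
def equilibriumQuadratic (a b r σ ξ : K) : K :=
  a ^ 2 * (ξ * ξ) + σ * b * (σ - a * (r - 2)) * ξ + -((σ * b) ^ 2 * (r - 1))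

theorem equilibriumQuadratic_eq (a b r σ ξ : K) :
    equilibriumQuadratic a b r σ ξ =
      (σ * b + a * ξ) ^ 2 - σ * b * (r * (σ * b + a * ξ) - σ * ξ) := by
  unfold equilibriumQuadratic
  ring

/-- The discriminant of `equilibriumQuadratic` with the factor `(σ * b) ^ 2` removed. -/
def reducedDiscrim (a r σ : K) : K :=
  (σ - a * r) ^ 2 + 4 * a * σ

theorem discrim_equilibriumQuadratic (a b r σ : K) :
    discrim (a ^ 2) (σ * b * (σ - a * (r - 2))) (-((σ * b) ^ 2 * (r - 1))) =
      (σ * b) ^ 2 * reducedDiscrim a r σ := by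
  unfold discrim reducedDiscrim
  ring

end CommRing

section Field

variable {K : Type*} [Field K] {a b r σ : K}

theorem denominator_ne_zero_of_equilibriumQuadratic_eq_zero (hσ : σ ≠ 0) (hb : b ≠ 0) {ξ : K}
    (hξ : equilibriumQuadratic a b r σ ξ = 0) : σ * b + a * ξ ≠ 0 := by
  intro hD
  have hξ_zero : ξ = 0 := by simpa [equilibriumQuadratic_eq, hD, hσ, hb] using hξ
  simp [hξ_zero, hσ, hb] at hD

theorem isEquilibrium_of_equilibriumQuadratic_eq_zero (hσ : σ ≠ 0) (hb : b ≠ 0) {y : K}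
    (hy : equilibriumQuadratic a b r σ (y ^ 2) = 0) :
    IsEquilibrium a b r σ (σ * b * y / (σ * b + a * y ^ 2)) y
      (σ * y ^ 2 / (σ * b + a * y ^ 2)) := by
  have hD := denominator_ne_zero_of_equilibriumQuadratic_eq_zero hσ hb hy
  rw [equilibriumQuadratic_eq] at hy
  generalize hD_eq : σ * b + a * y ^ 2 = D at hD hy ⊢
  refine ⟨?_, ?_, ?_⟩
  · field_simp
    linear_combination -σ * y * hD_eq
  · field_simp
    linear_combination -y * hy
  · field_simp
    ring

end Field

section Real

variable {a b r σ : ℝ}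

/-- The number `ξ` of the paper: the candidate for `y ^ 2` at the equilibria `S₊` and `S₋`. -/
noncomputable def equilibriumXi (a b r σ : ℝ) : ℝ :=
  (σ * b / (2 * a ^ 2)) * (a * (r - 2) - σ + √(reducedDiscrim a r σ))

theorem equilibriumQuadratic_equilibriumXi (ha : a ≠ 0) (hdisc : 0 ≤ reducedDiscrim a r σ) :
    equilibriumQuadratic a b r σ (equilibriumXi a b r σ) = 0 := by
  have hdiscrim : discrim (a ^ 2) (σ * b * (σ - a * (r - 2))) (-((σ * b) ^ 2 * (r - 1))) =
      (σ * b * √(reducedDiscrim a r σ)) * (σ * b * √(reducedDiscrim a r σ)) := by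
    rw [discrim_equilibriumQuadratic, mul_mul_mul_comm, Real.mul_self_sqrt hdisc, ← pow_two]
  refine (quadratic_eq_zero_iff (pow_ne_zero 2 ha) hdiscrim _).mpr (Or.inl ?_)
  unfold equilibriumXi
  ring

theorem sq_le_reducedDiscrim (a σ : ℝ) (hr : 1 ≤ r) :
    (a * (r - 2) - σ) ^ 2 ≤ reducedDiscrim a r σ := by
  have hgap : 0 ≤ 4 * a ^ 2 * (r - 1) := mul_nonneg (by positivity) (sub_nonneg.mpr hr)
  unfold reducedDiscrim
  linear_combination hgap

theorem reducedDiscrim_nonneg (a σ : ℝ) (hr : 1 ≤ r) : 0 ≤ reducedDiscrim a r σ :=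
  (sq_nonneg _).trans (sq_le_reducedDiscrim a σ hr)

theorem equilibriumXi_nonneg (a : ℝ) (hσb : 0 ≤ σ * b) (hr : 1 ≤ r) :
    0 ≤ equilibriumXi a b r σ := by
  have hsqrt : -√(reducedDiscrim a r σ) ≤ a * (r - 2) - σ :=
    neg_le_of_abs_le (Real.abs_le_sqrt (sq_le_reducedDiscrim a σ hr))
  exact mul_nonneg (by positivity) (neg_le_iff_add_nonneg.mp hsqrt)

end Real

end GeneralizedLorenz

open GeneralizedLorenz

theorem S_pm_are_equilibria_general
    {a b r σ ξ x₁ y₁ z₁ : ℝ} (ha : a ≠ 0) (hb : b ≠ 0) (hσ : σ ≠ 0)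
    (hdisc : 0 ≤ reducedDiscrim a r σ)
    (hXi : 0 ≤ equilibriumXi a b r σ)
    (hξ : ξ = equilibriumXi a b r σ)
    (hx₁ : x₁ = σ * b * √ξ / (σ * b + a * ξ))
    (hy₁ : y₁ = √ξ)
    (hz₁ : z₁ = σ * ξ / (σ * b + a * ξ)) :
    IsEquilibrium a b r σ x₁ y₁ z₁ ∧ IsEquilibrium a b r σ (-x₁) (-y₁) z₁ := by
  have hy_sq : y₁ ^ 2 = ξ := by rw [hy₁, Real.sq_sqrt (hXi.trans_eq hξ.symm)]
  have hquad : equilibriumQuadratic a b r σ (y₁ ^ 2) = 0 := by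
    rw [hy_sq, hξ]
    exact equilibriumQuadratic_equilibriumXi ha hdisc
  have hS : IsEquilibrium a b r σ x₁ y₁ z₁ := by
    have hpoint := isEquilibrium_of_equilibriumQuadratic_eq_zero hσ hb hquad
    rwa [hy_sq, hy₁, ← hx₁, ← hz₁, ← hy₁] at hpoint
  exact ⟨hS, hS.neg⟩

/-- S₊ and S₋ are equilibria of the generalized Lorenz system. -/
theorem S_pm_are_equilibria
    (a b r σ ξ x₁ y₁ z₁ : ℝ) (ha : a < 0) (hb : 0 < b) (hr : 1 < r) (hσ : σ = -a * r)
    (hξ : ξ = (σ * b / (2 * a ^ 2)) *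
      (a * (r - 2) - σ + Real.sqrt ((σ - a * r) ^ 2 + 4 * a * σ)))
    (hx₁ : x₁ = σ * b * Real.sqrt ξ / (σ * b + a * ξ))
    (hy₁ : y₁ = Real.sqrt ξ)
    (hz₁ : z₁ = σ * ξ / (σ * b + a * ξ)) :
    (-σ * (x₁ - y₁) - a * y₁ * z₁ = 0 ∧
      r * x₁ - y₁ - x₁ * z₁ = 0 ∧
      -b * z₁ + x₁ * y₁ = 0) ∧
    (-σ * (-x₁ - -y₁) - a * -y₁ * z₁ = 0 ∧
      r * -x₁ - -y₁ - -x₁ * z₁ = 0 ∧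
      -b * z₁ + -x₁ * -y₁ = 0) := by
  have hσ_pos : 0 < σ := hσ ▸ mul_pos (neg_pos.mpr ha) (zero_lt_one.trans hr)
  exact S_pm_are_equilibria_general ha.ne hb.ne' hσ_pos.ne' (reducedDiscrim_nonneg a σ hr.le)
    (equilibriumXi_nonneg a (mul_pos hσ_pos hb).le hr.le) hξ hx₁ hy₁ hz₁
end

section
/- Let a < 0, b > 0, r > 1, σ = −a·r, ξ = (σ·b/(2·a²))·(a·(r − 2) − σ + √((σ − a·r)² + 4·a·σ)), x₁ = σ·b·√ξ/(σ·b + a·ξ), y₁ = √ξ, z₁ = σ·ξ/(σ·b + a·ξ). Then every solution (x, y, z) ∈ ℝ³ of the system −σ(x − y) − a·y·z = 0, r·x − y − x·z = 0, −b·z + x·y = 0 equals one of the three points (0, 0, 0), (x₁, y₁, z₁), (−x₁, −y₁, z₁); i.e. the system has exactly three equilibria S₀, S₊, S₋. -/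
/-!
At an equilibrium `y = x * (r - z)`, and substituting this into the first equation leaves either
`x = 0` or the quadratic equation `a * z ^ 2 - (σ + a * r) * z + σ * (r - 1) = 0`. The third
equation becomes `b * z = x ^ 2 * (r - z)`, which for `x ≠ 0` forces `z > 0`. As
`a < 0 ≤ σ * (r - 1)`, only the larger root `ζ` of the quadratic can be positive. Hence `z = ζ` and
`y ^ 2 = b * ζ * (r - ζ)`, and this last number is `ξ`.
-/

section Quadratic

variable {a p c : ℝ}

theorem abs_le_sqrt_discrim (ha : a ≤ 0) (hc : 0 ≤ c) : |p| ≤ √(discrim a p c) :=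
  Real.abs_le_sqrt <| by
    rw [discrim]
    linarith [mul_nonneg (neg_nonneg.mpr ha) hc]

theorem discrim_eq_sqrt_mul_self (ha : a ≤ 0) (hc : 0 ≤ c) :
    discrim a p c = √(discrim a p c) * √(discrim a p c) :=
  have h : 0 ≤ discrim a p c := by
    rw [discrim]
    linarith [mul_nonneg (neg_nonneg.mpr ha) hc, sq_nonneg p]
  (Real.mul_self_sqrt h).symm

theorem quadratic_larger_root_nonneg (ha : a < 0) (hc : 0 ≤ c) :
    0 ≤ (-p - √(discrim a p c)) / (2 * a) :=
  div_nonneg_of_nonpos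
    (by linarith [neg_le_abs p, abs_le_sqrt_discrim (p := p) ha.le hc]) (by linarith)

theorem quadratic_eq_zero_iff_of_pos (ha : a < 0) (hc : 0 ≤ c) {z : ℝ} (hz : 0 < z) :
    a * (z * z) + p * z + c = 0 ↔ z = (-p - √(discrim a p c)) / (2 * a) := by
  have smaller_root_nonpos : (-p + √(discrim a p c)) / (2 * a) ≤ 0 :=
    div_nonpos_of_nonneg_of_nonpos
      (by linarith [le_abs_self p, abs_le_sqrt_discrim (p := p) ha.le hc]) (by linarith)
  rw [quadratic_eq_zero_iff ha.ne (discrim_eq_sqrt_mul_self ha.le hc)]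
  exact or_iff_right fun h ↦ (h ▸ smaller_root_nonpos).not_gt hz

end Quadratic

/-- The point `(x, y, z)` is an equilibrium of the generalized Lorenz (Rabinovich) system
`ẋ = -σ (x - y) - a y z`, `ẏ = r x - y - x z`, `ż = -b z + x y`. -/
structure IsRabinovichEquilibrium_s5 (a b r σ x y z : ℝ) : Prop where
  x_dot_eq_zero : -σ * (x - y) - a * y * z = 0
  y_dot_eq_zero : r * x - y - x * z = 0
  z_dot_eq_zero : -b * z + x * y = 0

/-- The common `z`-coordinate of the nontrivial equilibria `S₊` and `S₋`. Since the intended `a` is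
negative, the minus sign before the square root selects the larger root of the quadratic equation
`a * z ^ 2 - (σ + a * r) * z + σ * (r - 1) = 0`. -/
noncomputable def equilibriumHeight (a r σ : ℝ) : ℝ :=
  (σ + a * r - √((σ - a * r) ^ 2 + 4 * a * σ)) / (2 * a)

section Height

variable {a b r σ : ℝ}

theorem equilibriumHeight_eq_quadratic_root :
    equilibriumHeight a r σ =
      (-(-(σ + a * r)) - √(discrim a (-(σ + a * r)) (σ * (r - 1)))) / (2 * a) := by
  have h : discrim a (-(σ + a * r)) (σ * (r - 1)) = (σ - a * r) ^ 2 + 4 * a * σ := by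
    rw [discrim]
    ring
  rw [h, neg_neg, equilibriumHeight]

theorem equilibriumHeight_nonneg (ha : a < 0) (hσ : 0 ≤ σ) (hr : 1 ≤ r) :
    0 ≤ equilibriumHeight a r σ := by
  rw [equilibriumHeight_eq_quadratic_root]
  exact quadratic_larger_root_nonneg ha (mul_nonneg hσ (sub_nonneg.mpr hr))

theorem quadratic_equilibriumHeight (ha : a < 0) (hσ : 0 ≤ σ) (hr : 1 ≤ r) :
    a * (equilibriumHeight a r σ * equilibriumHeight a r σ)
      + -(σ + a * r) * equilibriumHeight a r σ + σ * (r - 1) = 0 :=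
  (quadratic_eq_zero_iff ha.ne
    (discrim_eq_sqrt_mul_self ha.le (mul_nonneg hσ (sub_nonneg.mpr hr))) _).mpr
      (.inr equilibriumHeight_eq_quadratic_root)

theorem equilibriumHeight_lt (ha : a < 0) (hσ : 0 < σ) (hr : 1 ≤ r) :
    equilibriumHeight a r σ < r := by
  set ζ := equilibriumHeight a r σ
  have hζ : 0 ≤ ζ := equilibriumHeight_nonneg ha hσ.le hr
  have factorization : (r - ζ) * (σ - a * ζ) = σ := by
    linear_combination quadratic_equilibriumHeight ha hσ.le hr
  have cofactor_pos : 0 < σ - a * ζ := by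
    linarith [mul_nonpos_of_nonpos_of_nonneg ha.le hζ]
  exact sub_pos.mp (pos_of_mul_pos_left (hσ.trans_eq factorization.symm) cofactor_pos.le)

theorem xi_formula_eq_equilibriumHeight (ha : a ≠ 0) :
    σ * b / (2 * a ^ 2) * (a * (r - 2) - σ + √((σ - a * r) ^ 2 + 4 * a * σ)) =
      σ * b / a * (r - 1 - equilibriumHeight a r σ) := by
  rw [equilibriumHeight]
  field_simp
  ring

theorem equilibriumHeight_mul_sub (ha : a < 0) (hσ : 0 ≤ σ) (hr : 1 ≤ r) :
    b * equilibriumHeight a r σ * (r - equilibriumHeight a r σ) =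
      σ * b / a * (r - 1 - equilibriumHeight a r σ) := by
  have ha₀ : a ≠ 0 := ha.ne
  field_simp
  linear_combination -b * quadratic_equilibriumHeight ha hσ hr

end Height

namespace IsRabinovichEquilibrium_s5

variable {a b r σ x y z : ℝ}

theorem iff_reduced :
    IsRabinovichEquilibrium_s5 a b r σ x y z ↔
      y = x * (r - z) ∧ b * z = x ^ 2 * (r - z) ∧
        x * (a * (z * z) + -(σ + a * r) * z + σ * (r - 1)) = 0 := by
  constructor
  · rintro ⟨hx, hy, hz⟩
    exact ⟨by linear_combination -hy, by linear_combination -hz - x * hy,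
      by linear_combination hx + (σ - a * z) * hy⟩
  · rintro ⟨rfl, hz, hx⟩
    exact ⟨by linear_combination hx, by ring, by linear_combination -hz⟩

theorem eq_zero_of_x_eq_zero (hb : b ≠ 0) (h : IsRabinovichEquilibrium_s5 a b r σ 0 y z) :
    y = 0 ∧ z = 0 := by
  obtain ⟨hy, hz, -⟩ := iff_reduced.mp h
  exact ⟨by simpa using hy, by simpa [hb] using hz⟩

theorem z_pos (hb : 0 < b) (hr : 0 < r) (hx : x ≠ 0)
    (h : IsRabinovichEquilibrium_s5 a b r σ x y z) : 0 < z := by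
  obtain ⟨-, hz, -⟩ := iff_reduced.mp h
  by_contra! hz_nonpos
  have hbz : 0 < b * z := hz ▸ mul_pos (sq_pos_of_ne_zero hx) (by linarith)
  exact hz_nonpos.not_gt (pos_of_mul_pos_right hbz hb.le)

theorem z_eq_equilibriumHeight (ha : a < 0) (hb : 0 < b) (hσ : 0 ≤ σ) (hr : 1 ≤ r) (hx : x ≠ 0)
    (h : IsRabinovichEquilibrium_s5 a b r σ x y z) : z = equilibriumHeight a r σ := by
  obtain ⟨-, -, hquad⟩ := iff_reduced.mp h
  rw [equilibriumHeight_eq_quadratic_root]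
  exact (quadratic_eq_zero_iff_of_pos ha (mul_nonneg hσ (sub_nonneg.mpr hr))
    (h.z_pos hb (by linarith) hx)).mp ((mul_eq_zero_iff_left hx).mp hquad)

theorem iff_at_equilibriumHeight (ha : a < 0) (hσ : 0 < σ) (hr : 1 ≤ r) :
    IsRabinovichEquilibrium_s5 a b r σ x y (equilibriumHeight a r σ) ↔
      x = y / (r - equilibriumHeight a r σ) ∧
        y ^ 2 = b * equilibriumHeight a r σ * (r - equilibriumHeight a r σ) := by
  rw [iff_reduced, quadratic_equilibriumHeight ha hσ.le hr]
  have hd : r - equilibriumHeight a r σ ≠ 0 := (sub_pos.mpr (equilibriumHeight_lt ha hσ hr)).ne'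
  generalize equilibriumHeight a r σ = ζ at hd ⊢
  rw [eq_div_iff hd]
  constructor
  · rintro ⟨rfl, hz, -⟩
    exact ⟨rfl, by linear_combination -(r - ζ) * hz⟩
  · rintro ⟨rfl, hy⟩
    exact ⟨rfl, mul_right_cancel₀ hd (by linear_combination -hy), mul_zero x⟩

theorem iff_eq_zero_or (ha : a < 0) (hb : 0 < b) (hσ : 0 < σ) (hr : 1 ≤ r) :
    IsRabinovichEquilibrium_s5 a b r σ x y z ↔
      (x, y, z) = (0, 0, 0) ∨
        z = equilibriumHeight a r σ ∧ x = y / (r - equilibriumHeight a r σ) ∧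
          y ^ 2 = b * equilibriumHeight a r σ * (r - equilibriumHeight a r σ) := by
  simp only [Prod.mk.injEq]
  constructor
  · intro h
    rcases eq_or_ne x 0 with rfl | hx
    · exact .inl ⟨rfl, h.eq_zero_of_x_eq_zero hb.ne'⟩
    · obtain rfl := h.z_eq_equilibriumHeight ha hb hσ.le hr hx
      exact .inr ⟨rfl, (iff_at_equilibriumHeight ha hσ hr).mp h⟩
  · rintro (⟨rfl, rfl, rfl⟩ | ⟨rfl, hxy⟩)
    · exact ⟨by ring, by ring, by ring⟩
    · exact (iff_at_equilibriumHeight ha hσ hr).mpr hxy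

end IsRabinovichEquilibrium_s5

theorem equilibria_classification_general
    {a b r σ ξ x₁ y₁ z₁ : ℝ} (ha : a < 0) (hb : 0 < b) (hσ : 0 < σ) (hr : 1 ≤ r)
    (hξ : ξ = (σ * b / (2 * a ^ 2)) *
      (a * (r - 2) - σ + √((σ - a * r) ^ 2 + 4 * a * σ)))
    (hx₁ : x₁ = σ * b * √ξ / (σ * b + a * ξ))
    (hy₁ : y₁ = √ξ)
    (hz₁ : z₁ = σ * ξ / (σ * b + a * ξ))
    {x y z : ℝ} :
    IsRabinovichEquilibrium_s5 a b r σ x y z ↔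
      (x, y, z) = (0, 0, 0) ∨ (x, y, z) = (x₁, y₁, z₁) ∨ (x, y, z) = (-x₁, -y₁, z₁) := by
  rw [xi_formula_eq_equilibriumHeight ha.ne] at hξ
  have hξ_quad := hξ.trans (equilibriumHeight_mul_sub ha hσ.le hr).symm
  rw [IsRabinovichEquilibrium_s5.iff_eq_zero_or ha hb hσ hr, ← hξ_quad]
  have hζ := equilibriumHeight_nonneg ha hσ.le hr
  have hd : 0 < r - equilibriumHeight a r σ := sub_pos.mpr (equilibriumHeight_lt ha hσ hr)
  generalize equilibriumHeight a r σ = ζ at *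
  have ha₀ : a ≠ 0 := ha.ne
  have denominator : σ * b + a * ξ = σ * b * (r - ζ) := by
    rw [hξ]
    field_simp
    ring
  have hx₁' : x₁ = y₁ / (r - ζ) := by rw [hx₁, hy₁, denominator]; field_simp
  have hz₁' : z₁ = ζ := by rw [hz₁, denominator, hξ_quad]; field_simp
  have hy₁_sq : y₁ ^ 2 = ξ := by rw [hy₁, Real.sq_sqrt (by rw [hξ_quad]; positivity)]
  rw [hx₁', hz₁', ← hy₁_sq, sq_eq_sq_iff_eq_or_eq_neg, ← neg_div]
  simp only [Prod.mk.injEq]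
  refine or_congr_right ⟨?_, ?_⟩
  · rintro ⟨rfl, rfl, rfl | rfl⟩ <;> simp
  · rintro (⟨rfl, rfl, rfl⟩ | ⟨rfl, rfl, rfl⟩) <;> simp

/-- for r > 1 the system has exactly the three equilibria S₀, S₊, S₋. -/
theorem equilibria_classification
    (a b r σ ξ x₁ y₁ z₁ : ℝ) (ha : a < 0) (hb : 0 < b) (hr : 1 < r) (hσ : σ = -a * r)
    (hξ : ξ = (σ * b / (2 * a ^ 2)) *
      (a * (r - 2) - σ + Real.sqrt ((σ - a * r) ^ 2 + 4 * a * σ)))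
    (hx₁ : x₁ = σ * b * Real.sqrt ξ / (σ * b + a * ξ))
    (hy₁ : y₁ = Real.sqrt ξ)
    (hz₁ : z₁ = σ * ξ / (σ * b + a * ξ))
    (x y z : ℝ)
    (h1 : -σ * (x - y) - a * y * z = 0)
    (h2 : r * x - y - x * z = 0)
    (h3 : -b * z + x * y = 0) :
    (x, y, z) = (0, 0, 0) ∨ (x, y, z) = (x₁, y₁, z₁) ∨ (x, y, z) = (-x₁, -y₁, z₁) := by
  have σ_pos : 0 < σ := hσ ▸ mul_pos (neg_pos.mpr ha) (by linarith)
  exact (equilibria_classification_general ha hb σ_pos hr.le hξ hx₁ hy₁ hz₁).mp ⟨h1, h2, h3⟩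
end

section
/- Let a < 0, b > 0, r > 1, σ = −a·r, ξ = (σ·b/(2·a²))·(a·(r − 2) − σ + √((σ − a·r)² + 4·a·σ)), x₁ = σ·b·√ξ/(σ·b + a·ξ), y₁ = √ξ, z₁ = σ·ξ/(σ·b + a·ξ). Then p₁ > 0 and p₃(x₁, y₁, z₁) > 0, where p₁ = b − a·r + 1 and p₃(x, y, z) = −a·(2·x·y·z + r·x² − y² + b·z² − b·r·(r − 1)). -/
/-!
The point `(x₁, y₁, z₁)` is an equilibrium of the Rabinovich system with `y₁ ≠ 0`: eliminating
`x` and `z` from the equilibrium equations leaves a quadratic equation for `y²`, of which `ξ` is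
the positive root. When `σ = -a * r`, the first equilibrium equation becomes `r * x = y * (r + z)`
and the second reads `y = x * (r - z)`, so that every equilibrium with `y ≠ 0` satisfies
`z² = r * (r - 1)`. Together with `x * y = b * z` this collapses `p₃` to `-4 * a * b * r * (r - 1)`.
-/

namespace Rabinovich

/-- `(x, y, z)` is an equilibrium of the generalized Lorenz (Rabinovich) system: the three
components of the vector field vanish there. -/
structure IsEquilibrium {R : Type*} [CommRing R] (a b r σ x y z : R) : Prop where
  dx_eq_zero : -σ * (x - y) - a * y * z = 0
  dy_eq_zero : r * x - y - x * z = 0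
  dz_eq_zero : -b * z + x * y = 0

namespace IsEquilibrium

section NoZeroDivisors

variable {R : Type*} [CommRing R] [NoZeroDivisors R] {a b r x y z : R}

theorem z_sq (h : IsEquilibrium a b r (-a * r) x y z) (ha : a ≠ 0) (hy : y ≠ 0) :
    z ^ 2 = r * (r - 1) := by
  have hx : r * x = y * (r + z) :=
    mul_left_cancel₀ ha (by linear_combination h.dx_eq_zero)
  have hxy : y = x * (r - z) := by linear_combination -h.dy_eq_zero
  have hr : r = (r + z) * (r - z) :=
    mul_left_cancel₀ hy (by linear_combination r * hxy + (r - z) * hx)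
  linear_combination hr

theorem p₃_eq (h : IsEquilibrium a b r (-a * r) x y z) (ha : a ≠ 0) (hy : y ≠ 0) :
    -a * (2 * x * y * z + r * x ^ 2 - y ^ 2 + b * z ^ 2 - b * r * (r - 1)) =
      -a * (4 * b * (r * (r - 1))) := by
  have hz : x * y = b * z := by linear_combination h.dz_eq_zero
  have hsq : a * (r * x ^ 2 - y ^ 2) = 2 * a * (x * y) * z := by
    linear_combination x * h.dx_eq_zero + a * y * h.dy_eq_zero
  linear_combination -hsq - 4 * a * z * hz - 5 * a * b * h.z_sq ha hy

end NoZeroDivisors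

section Field

variable {K : Type*} [Field K] {a b r σ ξ y : K}

theorem of_quadratic (hy : y ^ 2 = ξ) (hD : σ * b + a * ξ ≠ 0)
    (hξ : (σ * b + a * ξ) ^ 2 = σ * b * (r * (σ * b + a * ξ) - σ * ξ)) :
    IsEquilibrium a b r σ (σ * b * y / (σ * b + a * ξ)) y (σ * ξ / (σ * b + a * ξ)) where
  dx_eq_zero := by
    field_simp
    ring
  dy_eq_zero := by
    field_simp
    linear_combination -y * hξ
  dz_eq_zero := by
    linear_combination σ * b / (σ * b + a * ξ) * hy

end Field

end IsEquilibrium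

theorem denom_ne_zero_of_quadratic {K : Type*} [Field K] {a b r σ ξ : K} (hσ : σ ≠ 0) (hb : b ≠ 0)
    (hξ : (σ * b + a * ξ) ^ 2 = σ * b * (r * (σ * b + a * ξ) - σ * ξ)) :
    σ * b + a * ξ ≠ 0 := by
  intro hD
  have hξ₀ : ξ = 0 := by
    simpa [hD, hσ, hb] using hξ
  simp [hξ₀, hσ, hb] at hD

/-- The number `ξ` of the paper: the square of the `y`-coordinate of the equilibrium
`(x₁, y₁, z₁)`. -/
noncomputable def xi (a b r σ : ℝ) : ℝ :=
  (σ * b / (2 * a ^ 2)) * (a * (r - 2) - σ + √((σ - a * r) ^ 2 + 4 * a * σ))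

section Real

variable {a b r σ : ℝ}

theorem sq_lt_discrim (ha : a ≠ 0) (hr : 1 < r) :
    (a * (r - 2) - σ) ^ 2 < (σ - a * r) ^ 2 + 4 * a * σ := by
  have hpos : 0 < 4 * a ^ 2 * (r - 1) := mul_pos (by positivity) (sub_pos.mpr hr)
  linear_combination hpos

theorem xi_pos (ha : a ≠ 0) (hσb : 0 < σ * b) (hr : 1 < r) : 0 < xi a b r σ := by
  have hroot : -(a * (r - 2) - σ) < √((σ - a * r) ^ 2 + 4 * a * σ) :=
    Real.lt_sqrt_of_sq_lt (by simpa only [neg_sq] using sq_lt_discrim ha hr)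
  exact mul_pos (by positivity) (by linarith)

theorem xi_quadratic (ha : a ≠ 0) (hdisc : 0 ≤ (σ - a * r) ^ 2 + 4 * a * σ) :
    (σ * b + a * xi a b r σ) ^ 2 =
      σ * b * (r * (σ * b + a * xi a b r σ) - σ * xi a b r σ) := by
  have hs := Real.sq_sqrt hdisc
  unfold xi
  set s := √((σ - a * r) ^ 2 + 4 * a * σ)
  field_simp
  linear_combination σ ^ 2 * b ^ 2 * hs

theorem isEquilibrium_sqrt_xi (ha : a ≠ 0) (hσb : 0 < σ * b) (hr : 1 < r) :
    IsEquilibrium a b r σ (σ * b * √(xi a b r σ) / (σ * b + a * xi a b r σ)) √(xi a b r σ)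
      (σ * xi a b r σ / (σ * b + a * xi a b r σ)) := by
  have hσ : σ ≠ 0 := left_ne_zero_of_mul hσb.ne'
  have hb : b ≠ 0 := right_ne_zero_of_mul hσb.ne'
  have hξ := xi_quadratic (b := b) ha ((sq_nonneg _).trans (sq_lt_discrim (σ := σ) ha hr).le)
  exact .of_quadratic (Real.sq_sqrt (xi_pos ha hσb hr).le) (denom_ne_zero_of_quadratic hσ hb hξ) hξ

end Real

end Rabinovich

/-- p₁ > 0 and p₃(x₁, y₁, z₁) > 0. -/
theorem p1_pos_and_p3_pos
    (a b r σ ξ x₁ y₁ z₁ : ℝ) (ha : a < 0) (hb : 0 < b) (hr : 1 < r) (hσ : σ = -a * r)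
    (hξ : ξ = (σ * b / (2 * a ^ 2)) *
      (a * (r - 2) - σ + Real.sqrt ((σ - a * r) ^ 2 + 4 * a * σ)))
    (hx₁ : x₁ = σ * b * Real.sqrt ξ / (σ * b + a * ξ))
    (hy₁ : y₁ = Real.sqrt ξ)
    (hz₁ : z₁ = σ * ξ / (σ * b + a * ξ)) :
    0 < b - a * r + 1 ∧
    0 < -a * (2 * x₁ * y₁ * z₁ + r * x₁ ^ 2 - y₁ ^ 2 + b * z₁ ^ 2 - b * r * (r - 1)) := by
  have hna : 0 < -a := neg_pos.mpr ha
  have hr₀ : 0 < r := zero_lt_one.trans hr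
  have har : 0 < -a * r := mul_pos hna hr₀
  have hσb : 0 < σ * b := hσ ▸ mul_pos har hb
  change ξ = Rabinovich.xi a b r σ at hξ
  have hy₀ : y₁ ≠ 0 := by
    rw [hy₁, hξ]
    exact (Real.sqrt_pos.mpr (Rabinovich.xi_pos ha.ne hσb hr)).ne'
  have heq : Rabinovich.IsEquilibrium a b r (-a * r) x₁ y₁ z₁ := by
    rw [← hσ, hx₁, hy₁, hz₁, hξ]
    exact Rabinovich.isEquilibrium_sqrt_xi ha.ne hσb hr
  refine ⟨by linarith, ?_⟩
  rw [heq.p₃_eq ha.ne hy₀]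
  exact mul_pos hna (mul_pos (by positivity) (mul_pos hr₀ (sub_pos.mpr hr)))
end

section
/- Let a < 0, b > 0, r > 1, σ = −a·r, ξ = (σ·b/(2·a²))·(a·(r − 2) − σ + √((σ − a·r)² + 4·a·σ)), x₁ = σ·b·√ξ/(σ·b + a·ξ), y₁ = √ξ, z₁ = σ·ξ/(σ·b + a·ξ). If a·r + 1 ≥ 0, then p₁·p₂(x₁, y₁, z₁) − p₃(x₁, y₁, z₁) > 0, where p₁ = b − a·r + 1, p₂(x, y, z) = x² + a·y² − a·z² − a·r·(b − r + 1) + b, p₃(x, y, z) = −a·(2·x·y·z + r·x² − y² + b·z² − b·r·(r − 1)). -/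
/-!
At an equilibrium with `y ≠ 0`, the choice `σ = -a * r` turns `ẋ = 0` into `r * x = y * (r + z)`,
while `ẏ = 0` reads `y = x * (r - z)`. Multiplying the two gives `z ^ 2 = r ^ 2 - r`, and with
`x * y = b * z` all monomials of `p₁ * p₂ - p₃` become polynomials in `z`. Writing `t = -a * r`,
the minor collapses to `b * ((b + t + 1) * (r + z + t * (r - z)) - 4 * t * (r - 1))`. Since
`r - 1 < z < r`, the second factor exceeds `r + z > 2 * (r - 1)`, and for `t ≤ 1` the first one
exceeds `2 * t`.

Eliminating `x` and `z` from the equilibrium equations leaves a quadratic equation for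
`y ^ 2`. For `r > 1` its roots have opposite signs, and `ξ` is the positive one.
-/

/-- The point `(x, y, z)` is an equilibrium of the generalized Lorenz (Rabinovich) system with
parameters `a`, `b`, `r`, `σ`: each field is the vanishing of one component of the vector field. -/
structure IsLorenzEquilibrium {K : Type*} [CommRing K] (a b r σ x y z : K) : Prop where
  xdot_eq_zero : -σ * (x - y) - a * y * z = 0
  ydot_eq_zero : r * x - y - x * z = 0
  zdot_eq_zero : -b * z + x * y = 0

/-- The second Hurwitz minor `p₁ * p₂ - p₃` of the characteristic polynomial
`λ ^ 3 + p₁ * λ ^ 2 + p₂ * λ + p₃` of the Jacobian at `(x, y, z)`. The relation `σ = -a * r` has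
been substituted in the coefficients, which is why `σ` is not an argument. -/
def lorenzHurwitzMinor {K : Type*} [CommRing K] (a b r x y z : K) : K :=
  (b - a * r + 1) * (x ^ 2 + a * y ^ 2 - a * z ^ 2 - a * r * (b - r + 1) + b) -
    (-a * (2 * x * y * z + r * x ^ 2 - y ^ 2 + b * z ^ 2 - b * r * (r - 1)))

/-- The number `ξ`, the common value of `y ^ 2` at the two nonzero equilibria `S₊` and `S₋` of the
generalized Lorenz system. -/
noncomputable def lorenzXi (a b r σ : ℝ) : ℝ :=
  σ * b / (2 * a ^ 2) * (a * (r - 2) - σ + √((σ - a * r) ^ 2 + 4 * a * σ))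

namespace IsLorenzEquilibrium

section CommRing

variable {K : Type*} [CommRing K] {a b r σ x y z : K}

theorem y_eq (h : IsLorenzEquilibrium a b r σ x y z) : y = x * (r - z) := by
  linear_combination -h.ydot_eq_zero

theorem x_mul_y (h : IsLorenzEquilibrium a b r σ x y z) : x * y = b * z := by
  linear_combination h.zdot_eq_zero

end CommRing

section IsDomain

variable {K : Type*} [CommRing K] [IsDomain K] {a b r x y z : K}

theorem r_mul_x (h : IsLorenzEquilibrium a b r (-a * r) x y z) (ha : a ≠ 0) :
    r * x = y * (r + z) :=
  mul_left_cancel₀ ha (by linear_combination h.xdot_eq_zero)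

theorem z_sq (h : IsLorenzEquilibrium a b r (-a * r) x y z) (ha : a ≠ 0) (hy : y ≠ 0) :
    z ^ 2 = r ^ 2 - r := by
  have hmul : y * r = y * ((r + z) * (r - z)) := by
    calc y * r = r * x * (r - z) := by linear_combination r * h.y_eq
      _ = y * ((r + z) * (r - z)) := by rw [h.r_mul_x ha, mul_assoc]
  linear_combination mul_left_cancel₀ hy hmul

theorem x_sq (h : IsLorenzEquilibrium a b r (-a * r) x y z) (ha : a ≠ 0) (hr : r ≠ 0)
    (hy : y ≠ 0) : x ^ 2 = b * (z + r - 1) := by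
  refine mul_left_cancel₀ hr ?_
  calc r * x ^ 2 = x * y * (r + z) := by linear_combination x * h.r_mul_x ha
    _ = b * z * (r + z) := by rw [h.x_mul_y]
    _ = r * (b * (z + r - 1)) := by linear_combination b * h.z_sq ha hy

theorem y_sq (h : IsLorenzEquilibrium a b r (-a * r) x y z) (ha : a ≠ 0) (hy : y ≠ 0) :
    y ^ 2 = r * b * (z - r + 1) := by
  calc y ^ 2 = x * y * (r - z) := by linear_combination y * h.y_eq
    _ = b * z * (r - z) := by rw [h.x_mul_y]
    _ = r * b * (z - r + 1) := by linear_combination -b * h.z_sq ha hy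

theorem lorenzHurwitzMinor_eq (h : IsLorenzEquilibrium a b r (-a * r) x y z) (ha : a ≠ 0)
    (hr : r ≠ 0) (hy : y ≠ 0) :
    lorenzHurwitzMinor a b r x y z =
      b * ((b + -a * r + 1) * (r + z + -a * r * (r - z)) - 4 * (-a * r) * (r - 1)) := by
  have hxyz : 2 * x * y * z = 2 * b * z ^ 2 := by linear_combination 2 * z * h.x_mul_y
  rw [lorenzHurwitzMinor, hxyz, h.x_sq ha hr hy, h.y_sq ha hy, h.z_sq ha hy]
  ring

end IsDomain

section OrderedRing

variable {K : Type*} [CommRing K] [LinearOrder K] [IsStrictOrderedRing K] {a b r x y z : K}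

theorem abs_z_lt (h : IsLorenzEquilibrium a b r (-a * r) x y z) (ha : a ≠ 0) (hr : 0 < r)
    (hy : y ≠ 0) : |z| < r :=
  abs_lt_of_sq_lt_sq (by linarith [h.z_sq ha hy]) hr.le

theorem sub_one_lt_z (h : IsLorenzEquilibrium a b r (-a * r) x y z) (ha : a ≠ 0) (hb : 0 < b)
    (hr : 0 < r) (hy : y ≠ 0) : r - 1 < z := by
  have hprod : 0 < r * b * (z - r + 1) := h.y_sq ha hy ▸ sq_pos_of_ne_zero hy
  linarith [pos_of_mul_pos_right hprod (mul_pos hr hb).le]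

end OrderedRing

end IsLorenzEquilibrium

theorem hurwitz_minor_pos_of_ar_add_one_nonneg_general
    {K : Type*} [CommRing K] [LinearOrder K] [IsStrictOrderedRing K] {a b r x y z : K}
    (ha : a < 0) (hb : 0 < b) (hr : 0 < r) (h : IsLorenzEquilibrium a b r (-a * r) x y z)
    (hy : y ≠ 0) (har : 0 ≤ a * r + 1) :
    0 < lorenzHurwitzMinor a b r x y z := by
  rw [h.lorenzHurwitzMinor_eq ha.ne hr.ne' hy]
  refine mul_pos hb (sub_pos.mpr ?_)
  have ht : 0 < -a * r := mul_pos (neg_pos.mpr ha) hr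
  obtain ⟨hneg, hlt⟩ := abs_lt.mp (h.abs_z_lt ha.ne hr hy)
  have hz : r - 1 < z := h.sub_one_lt_z ha.ne hb hr hy
  calc 4 * (-a * r) * (r - 1) = 2 * (-a * r) * (2 * (r - 1)) := by ring
    _ < 2 * (-a * r) * (r + z) := by gcongr; linarith
    _ ≤ (b + -a * r + 1) * (r + z) := by gcongr <;> linarith
    _ ≤ (b + -a * r + 1) * (r + z + -a * r * (r - z)) := by
      gcongr _ * ?_
      exact le_add_of_nonneg_right (mul_pos ht (sub_pos.mpr hlt)).le

theorem isLorenzEquilibrium_of_sq_eq {K : Type*} [Field K] {a b r σ y d : K} (hd : d ≠ 0)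
    (hd_eq : d = σ * b + a * y ^ 2) (hsq : d ^ 2 = σ * b * (r * d - σ * y ^ 2)) :
    IsLorenzEquilibrium a b r σ (σ * b * y / d) y (σ * y ^ 2 / d) where
  xdot_eq_zero := by field_simp; linear_combination σ * y * hd_eq
  ydot_eq_zero := by field_simp; linear_combination -y * hsq
  zdot_eq_zero := by field_simp; ring

section Xi

variable {a b r σ : ℝ}

theorem sq_lt_lorenz_discrim (ha : a ≠ 0) (hr : 1 < r) :
    (σ - a * (r - 2)) ^ 2 < (σ - a * r) ^ 2 + 4 * a * σ := by
  have hpos : 0 < 4 * a ^ 2 * (r - 1) := mul_pos (by positivity) (sub_pos.mpr hr)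
  calc (σ - a * (r - 2)) ^ 2 < (σ - a * (r - 2)) ^ 2 + 4 * a ^ 2 * (r - 1) :=
        lt_add_of_pos_right _ hpos
    _ = (σ - a * r) ^ 2 + 4 * a * σ := by ring

theorem lorenz_discrim_pos (ha : a ≠ 0) (hr : 1 < r) : 0 < (σ - a * r) ^ 2 + 4 * a * σ :=
  (sq_nonneg _).trans_lt (sq_lt_lorenz_discrim ha hr)

theorem lorenzXi_pos (ha : a ≠ 0) (hb : 0 < b) (hσ : 0 < σ) (hr : 1 < r) :
    0 < lorenzXi a b r σ := by
  have hlt : σ - a * (r - 2) < √((σ - a * r) ^ 2 + 4 * a * σ) :=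
    Real.lt_sqrt_of_sq_lt (sq_lt_lorenz_discrim ha hr)
  exact mul_pos (by positivity) (by linarith)

theorem sq_add_mul_lorenzXi (ha : a ≠ 0) (hdisc : 0 ≤ (σ - a * r) ^ 2 + 4 * a * σ) :
    (σ * b + a * lorenzXi a b r σ) ^ 2 =
      σ * b * (r * (σ * b + a * lorenzXi a b r σ) - σ * lorenzXi a b r σ) := by
  have hs := Real.sq_sqrt hdisc
  rw [lorenzXi]
  generalize √((σ - a * r) ^ 2 + 4 * a * σ) = s at hs ⊢
  field_simp
  linear_combination σ ^ 2 * b ^ 2 * hs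

theorem add_mul_lorenzXi_ne_zero (ha : a ≠ 0) (hb : 0 < b) (hσ : 0 < σ) (hr : 1 < r) :
    σ * b + a * lorenzXi a b r σ ≠ 0 := by
  intro hzero
  have hsq := sq_add_mul_lorenzXi (b := b) ha (lorenz_discrim_pos (σ := σ) ha hr).le
  have hpos : 0 < σ * b * (σ * lorenzXi a b r σ) :=
    mul_pos (mul_pos hσ hb) (mul_pos hσ (lorenzXi_pos ha hb hσ hr))
  rw [hzero] at hsq
  linarith

theorem isLorenzEquilibrium_lorenzXi (ha : a ≠ 0) (hb : 0 < b) (hσ : 0 < σ) (hr : 1 < r) :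
    IsLorenzEquilibrium a b r σ
      (σ * b * √(lorenzXi a b r σ) / (σ * b + a * lorenzXi a b r σ))
      √(lorenzXi a b r σ)
      (σ * lorenzXi a b r σ / (σ * b + a * lorenzXi a b r σ)) := by
  have hy : √(lorenzXi a b r σ) ^ 2 = lorenzXi a b r σ :=
    Real.sq_sqrt (lorenzXi_pos ha hb hσ hr).le
  have hsq := sq_add_mul_lorenzXi (b := b) ha (lorenz_discrim_pos (σ := σ) ha hr).le
  simpa only [hy] using isLorenzEquilibrium_of_sq_eq (y := √(lorenzXi a b r σ))
    (add_mul_lorenzXi_ne_zero ha hb hσ hr) (by rw [hy]) (by rw [hy, hsq])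

end Xi

/-- if a·r + 1 ≥ 0 then p₁·p₂ − p₃ > 0 at S₊. -/
theorem hurwitz_minor_pos_of_ar_add_one_nonneg
    (a b r σ ξ x₁ y₁ z₁ : ℝ) (ha : a < 0) (hb : 0 < b) (hr : 1 < r) (hσ : σ = -a * r)
    (hξ : ξ = (σ * b / (2 * a ^ 2)) *
      (a * (r - 2) - σ + Real.sqrt ((σ - a * r) ^ 2 + 4 * a * σ)))
    (hx₁ : x₁ = σ * b * Real.sqrt ξ / (σ * b + a * ξ))
    (hy₁ : y₁ = Real.sqrt ξ)
    (hz₁ : z₁ = σ * ξ / (σ * b + a * ξ))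
    (har : 0 ≤ a * r + 1) :
    0 < (b - a * r + 1) *
        (x₁ ^ 2 + a * y₁ ^ 2 - a * z₁ ^ 2 - a * r * (b - r + 1) + b) -
        (-a * (2 * x₁ * y₁ * z₁ + r * x₁ ^ 2 - y₁ ^ 2 + b * z₁ ^ 2 - b * r * (r - 1))) := by
  have hr₀ : 0 < r := zero_lt_one.trans hr
  have hσ₀ : 0 < σ := hσ ▸ mul_pos (neg_pos.mpr ha) hr₀
  change ξ = lorenzXi a b r σ at hξ
  have hS : IsLorenzEquilibrium a b r σ x₁ y₁ z₁ := by
    rw [hx₁, hy₁, hz₁, hξ]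
    exact isLorenzEquilibrium_lorenzXi ha.ne hb hσ₀ hr
  have hy : y₁ ≠ 0 := by
    rw [hy₁, hξ]
    exact (Real.sqrt_pos.mpr (lorenzXi_pos ha.ne hb hσ₀ hr)).ne'
  exact hurwitz_minor_pos_of_ar_add_one_nonneg_general ha hb hr₀ (hσ ▸ hS) hy har
end

section
/- Let a < 0, b > 0, r > 1, σ = −a·r, ξ = (σ·b/(2·a²))·(a·(r − 2) − σ + √((σ − a·r)² + 4·a·σ)), x₁ = σ·b·√ξ/(σ·b + a·ξ), y₁ = √ξ, z₁ = σ·ξ/(σ·b + a·ξ). If 0 ≤ a·r + 1 and a·r + 1 < 2·r/(r − √(r·(r − 1))), then p₂(x₁, y₁, z₁) > 0, where p₂(x, y, z) = x² + a·y² − a·z² − a·r·(b − r + 1) + b. -/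
/-!
Put `s = √(r * (r - 1))`. For `σ = -a * r` the square root in `ξ` is `-2 * a * s`, whence
`ξ = b * s * (r - s)` and `z₁ = s`. Inserting `z₁ ^ 2 = r * (r - 1)` turns `p₂` into
`x₁ ^ 2 + b - a * (b * r - y₁ ^ 2)`, and `y₁ ^ 2 = ξ ≤ b * r` because `s ≤ r`.
-/

namespace Rabinovich

variable {a b r s y z : ℝ}

theorem sqrt_discrim_eq (ha : a ≤ 0) (r : ℝ) :
    √((-a * r - a * r) ^ 2 + 4 * a * (-a * r)) = -2 * a * √(r * (r - 1)) :=
  calc √((-a * r - a * r) ^ 2 + 4 * a * (-a * r))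
      = √((-2 * a) ^ 2 * (r * (r - 1))) := by ring_nf
    _ = -2 * a * √(r * (r - 1)) := by
        rw [Real.sqrt_mul (sq_nonneg _), Real.sqrt_sq (by linarith)]

theorem xi_eq (ha : a < 0) (hr : 0 ≤ r * (r - 1)) (b : ℝ) :
    (-a * r * b / (2 * a ^ 2)) *
        (a * (r - 2) - -a * r + √((-a * r - a * r) ^ 2 + 4 * a * (-a * r))) =
      b * √(r * (r - 1)) * (r - √(r * (r - 1))) := by
  have ha' : a ≠ 0 := ha.ne
  rw [sqrt_discrim_eq ha.le]
  field_simp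
  linear_combination 2 * b * Real.sq_sqrt hr

theorem z_eq (ha : a ≠ 0) (hb : b ≠ 0) (hr : r ≠ 0) (hs : s ^ 2 = r * (r - 1)) :
    -a * r * (b * s * (r - s)) / (-a * r * b + a * (b * s * (r - s))) = s := by
  have hrs : r - s ≠ 0 := fun h ↦ hr (by linear_combination hs + (r + s) * h)
  have denom_eq : -a * r * b + a * (b * s * (r - s)) = -a * r * b * (r - s) := by
    linear_combination -a * b * hs
  rw [denom_eq]
  field_simp

theorem xi_le (hb : 0 ≤ b) (hr : 0 ≤ r) (hs : s ^ 2 = r * (r - 1)) :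
    b * s * (r - s) ≤ b * r := by
  have hsr : s ≤ r := le_of_sq_le_sq (by linarith) hr
  have hgap : b * r - b * s * (r - s) = b * r * (r - s) := by linear_combination b * hs
  have : 0 ≤ b * r * (r - s) := mul_nonneg (mul_nonneg hb hr) (sub_nonneg.mpr hsr)
  linarith

theorem p2_pos_of_sq_le (ha : a ≤ 0) (hb : 0 < b) (hy : y ^ 2 ≤ b * r) (hz : z ^ 2 = r * (r - 1))
    (x : ℝ) : 0 < x ^ 2 + a * y ^ 2 - a * z ^ 2 - a * r * (b - r + 1) + b :=
  calc 0 < x ^ 2 + b + -a * (b * r - y ^ 2) :=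
        add_pos_of_pos_of_nonneg (by positivity)
          (mul_nonneg (neg_nonneg.mpr ha) (sub_nonneg.mpr hy))
    _ = x ^ 2 + a * y ^ 2 - a * z ^ 2 - a * r * (b - r + 1) + b := by
        linear_combination a * hz

end Rabinovich

open Rabinovich in
theorem p2_pos_of_cond_i_general
    (a b r σ ξ x y₁ z₁ : ℝ) (ha : a < 0) (hb : 0 < b) (hr : 1 ≤ r) (hσ : σ = -a * r)
    (hξ : ξ = (σ * b / (2 * a ^ 2)) *
      (a * (r - 2) - σ + Real.sqrt ((σ - a * r) ^ 2 + 4 * a * σ)))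
    (hy₁ : y₁ = Real.sqrt ξ)
    (hz₁ : z₁ = σ * ξ / (σ * b + a * ξ)) :
    0 < x ^ 2 + a * y₁ ^ 2 - a * z₁ ^ 2 - a * r * (b - r + 1) + b := by
  have hr0 : 0 < r := by linarith
  have hrr : 0 ≤ r * (r - 1) := mul_nonneg hr0.le (sub_nonneg.mpr hr)
  have hs : √(r * (r - 1)) ^ 2 = r * (r - 1) := Real.sq_sqrt hrr
  rw [hσ, xi_eq ha hrr] at hξ
  have hξ_le : ξ ≤ b * r := hξ.trans_le (xi_le hb.le hr0.le hs)
  have hy : y₁ ^ 2 ≤ b * r :=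
    calc y₁ ^ 2 = √ξ ^ 2 := by rw [hy₁]
      _ ≤ √(b * r) ^ 2 := by gcongr
      _ = b * r := Real.sq_sqrt (mul_nonneg hb.le hr0.le)
  have hz : z₁ = √(r * (r - 1)) := by
    rw [hz₁, hσ, hξ, z_eq ha.ne hb.ne' hr0.ne' hs]
  exact p2_pos_of_sq_le ha.le hb hy (by rw [hz, hs]) x

/-- condition (i) implies p₂(x₁, y₁, z₁) > 0. -/
theorem p2_pos_of_cond_i
    (a b r σ ξ x₁ y₁ z₁ : ℝ) (ha : a < 0) (hb : 0 < b) (hr : 1 < r) (hσ : σ = -a * r)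
    (hξ : ξ = (σ * b / (2 * a ^ 2)) *
      (a * (r - 2) - σ + Real.sqrt ((σ - a * r) ^ 2 + 4 * a * σ)))
    (hx₁ : x₁ = σ * b * Real.sqrt ξ / (σ * b + a * ξ))
    (hy₁ : y₁ = Real.sqrt ξ)
    (hz₁ : z₁ = σ * ξ / (σ * b + a * ξ))
    (har0 : 0 ≤ a * r + 1)
    (har1 : a * r + 1 < 2 * r / (r - Real.sqrt (r * (r - 1)))) :
    0 < x₁ ^ 2 + a * y₁ ^ 2 - a * z₁ ^ 2 - a * r * (b - r + 1) + b :=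
  p2_pos_of_cond_i_general a b r σ ξ x₁ y₁ z₁ ha hb hr.le hσ hξ hy₁ hz₁
end

section
/- Let a < 0, b > 0, r > 1, σ = −a·r, ξ = (σ·b/(2·a²))·(a·(r − 2) − σ + √((σ − a·r)² + 4·a·σ)), x₁ = σ·b·√ξ/(σ·b + a·ξ), y₁ = √ξ, z₁ = σ·ξ/(σ·b + a·ξ). If a·r + 1 < 0 and b > b_cr, where b_cr = (4·a·(r − 1)·(a·r + 1)·√(r·(r − 1)) + (a·r − 1)³)/((a·r + 1)² − 4·a·r²), then p₁·p₂(x₁, y₁, z₁) − p₃(x₁, y₁, z₁) > 0, where p₁ = b − a·r + 1, p₂(x, y, z) = x² + a·y² − a·z² − a·r·(b − r + 1) + b, p₃(x, y, z) = −a·(2·x·y·z + r·x² − y² + b·z² − b·r·(r − 1)). -/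
/-! At a nonzero equilibrium of the system with `σ = -a * r`, the first two equations force
`z ^ 2 = r * (r - 1)`, and all three express `x ^ 2`, `y ^ 2` and `x * y` through `z`. The Hurwitz
minor thereby becomes affine in `z`, and multiplying it by a positive conjugate factor turns it into
`b * r` times a polynomial that is affine in `b`, whose root is the critical value of `b`. -/

namespace GeneralizedLorenz

/-- The point `(x, y, z)` is an equilibrium of the generalized Lorenz system
`ẋ = -σ(x - y) - ayz`, `ẏ = rx - y - xz`, `ż = -bz + xy`. -/
structure IsEquilibrium_s11 {R : Type*} [CommRing R] (σ a b r x y z : R) : Prop where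
  dx_eq_zero : -σ * (x - y) - a * y * z = 0
  dy_eq_zero : r * x - y - x * z = 0
  dz_eq_zero : -b * z + x * y = 0

/-- The paper's `ξ`: the square of the `y`-coordinate of the two nonzero equilibria. -/
noncomputable def xi (σ a b r : ℝ) : ℝ :=
  (σ * b / (2 * a ^ 2)) * (a * (r - 2) - σ + √((σ - a * r) ^ 2 + 4 * a * σ))

/-- The minor `p₁ * p₂ - p₃` of the Routh–Hurwitz criterion, for the characteristic polynomial
`λ ^ 3 + p₁ * λ ^ 2 + p₂ * λ + p₃` of the Jacobian at `(x, y, z)` when `σ = -a * r`. -/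
def hurwitzMinor {R : Type*} [CommRing R] (a b r x y z : R) : R :=
  (b - a * r + 1) * (x ^ 2 + a * y ^ 2 - a * z ^ 2 - a * r * (b - r + 1) + b) -
    (-a * (2 * x * y * z + r * x ^ 2 - y ^ 2 + b * z ^ 2 - b * r * (r - 1)))

/-- The paper's `b_cr`: the value of `b` at which the Hurwitz minor of the nonzero equilibria with
`z > 0` changes sign when `σ = -a * r`. -/
noncomputable def criticalB (a r : ℝ) : ℝ :=
  (4 * a * (r - 1) * (a * r + 1) * √(r * (r - 1)) + (a * r - 1) ^ 3) /
    ((a * r + 1) ^ 2 - 4 * a * r ^ 2)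

-- `hquad` is the equation `ẏ = 0` after `x` and `z` have been eliminated and `y` cancelled.
theorem isEquilibrium_of_mul_eq {K : Type*} [Field K] {σ a b r y : K}
    (hden : σ * b + a * y ^ 2 ≠ 0)
    (hquad : (σ * b + a * y ^ 2) * ((r - 1) * σ * b - a * y ^ 2) = σ ^ 2 * b * y ^ 2) :
    IsEquilibrium_s11 σ a b r (σ * b * y / (σ * b + a * y ^ 2)) y
      (σ * y ^ 2 / (σ * b + a * y ^ 2)) := by
  generalize hd : σ * b + a * y ^ 2 = d at *
  constructor
  · field_simp
    linear_combination -σ * y * hd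
  · field_simp
    linear_combination y * hquad + y * d * hd
  · field_simp
    ring

theorem xi_discrim_eq {R : Type*} [CommRing R] (σ a r : R) :
    (σ - a * r) ^ 2 + 4 * a * σ = (a * (r - 2) - σ) ^ 2 + 4 * a ^ 2 * (r - 1) := by
  ring

section Xi

variable {σ a b r : ℝ}

theorem xi_quadratic (ha : a ≠ 0) (hr : 1 ≤ r) :
    (σ * b + a * xi σ a b r) * ((r - 1) * σ * b - a * xi σ a b r) =
      σ ^ 2 * b * xi σ a b r := by
  have hdiscrim : 0 ≤ (σ - a * r) ^ 2 + 4 * a * σ := by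
    have := sub_nonneg.2 hr
    rw [xi_discrim_eq]
    positivity
  have hsq := Real.sq_sqrt hdiscrim
  unfold xi
  generalize √((σ - a * r) ^ 2 + 4 * a * σ) = t at *
  field_simp
  linear_combination (-σ ^ 2 * b ^ 2) * hsq

theorem xi_pos (hσ : 0 < σ) (ha : a ≠ 0) (hb : 0 < b) (hr : 1 < r) : 0 < xi σ a b r := by
  have hsqrt : -(a * (r - 2) - σ) < √((σ - a * r) ^ 2 + 4 * a * σ) := by
    have := sub_pos.2 hr
    apply Real.lt_sqrt_of_sq_lt
    rw [xi_discrim_eq, neg_sq]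
    exact lt_add_of_pos_right _ (by positivity)
  have := neg_lt_iff_pos_add'.1 hsqrt
  unfold xi
  positivity

theorem add_mul_xi_pos (hσ : 0 < σ) (ha : a < 0) (hb : 0 < b) (hr : 0 ≤ r) :
    0 < σ * b + a * xi σ a b r := by
  have hsqrt : √((σ - a * r) ^ 2 + 4 * a * σ) < σ - a * r := by
    have haσ := mul_neg_of_neg_of_pos ha hσ
    rw [Real.sqrt_lt' (by nlinarith)]
    linarith
  have hfactor : σ * b + a * xi σ a b r =
      σ * b / (2 * -a) * (σ - a * r - √((σ - a * r) ^ 2 + 4 * a * σ)) := by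
    have := ha.ne
    unfold xi
    field_simp
    ring
  have := neg_pos.2 ha
  have := sub_pos.2 hsqrt
  rw [hfactor]
  positivity

theorem isEquilibrium_sqrt_xi (hσ : 0 < σ) (ha : a < 0) (hb : 0 < b) (hr : 1 < r) :
    IsEquilibrium_s11 σ a b r (σ * b * √(xi σ a b r) / (σ * b + a * xi σ a b r)) √(xi σ a b r)
      (σ * xi σ a b r / (σ * b + a * xi σ a b r)) := by
  have hsq : √(xi σ a b r) ^ 2 = xi σ a b r := Real.sq_sqrt (xi_pos hσ ha.ne hb hr).le
  have hden := (add_mul_xi_pos hσ ha hb (by linarith : 0 ≤ r)).ne'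
  simpa only [hsq] using isEquilibrium_of_mul_eq (y := √(xi σ a b r)) (by rwa [hsq])
    (by rw [hsq]; exact xi_quadratic ha.ne hr.le)

end Xi

namespace IsEquilibrium_s11

theorem y_sq {R : Type*} [CommRing R] {σ a b r x y z : R}
    (h : IsEquilibrium_s11 σ a b r x y z) : y ^ 2 = b * z * (r - z) := by
  linear_combination (r - z) * h.dz_eq_zero - y * h.dy_eq_zero

section Domain

variable {R : Type*} [CommRing R] [IsDomain R] {a b r x y z : R}

theorem z_sq (h : IsEquilibrium_s11 (-a * r) a b r x y z) (ha : a ≠ 0) (hx : x ≠ 0) :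
    z ^ 2 = r * (r - 1) := by
  apply mul_left_cancel₀ (mul_ne_zero ha hx)
  linear_combination h.dx_eq_zero - a * (r + z) * h.dy_eq_zero

theorem x_sq (h : IsEquilibrium_s11 (-a * r) a b r x y z) (ha : a ≠ 0) (hr : r ≠ 0) (hx : x ≠ 0) :
    x ^ 2 = b * (z + r - 1) := by
  apply mul_left_cancel₀ hr
  linear_combination (r + z) * (x * h.dy_eq_zero + h.dz_eq_zero) + (x ^ 2 + b) * h.z_sq ha hx

theorem hurwitzMinor_eq (h : IsEquilibrium_s11 (-a * r) a b r x y z) (ha : a ≠ 0) (hr : r ≠ 0)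
    (hx : x ≠ 0) :
    hurwitzMinor a b r x y z =
      b * ((b + 1 - a * r) * (z * (1 + a * r) + r * (1 - a * r)) + 4 * a * r * (r - 1)) := by
  have hxy : x * y = b * z := by linear_combination h.dz_eq_zero
  unfold hurwitzMinor
  linear_combination (b + 1) * h.x_sq ha hr hx + a * (b - a * r) * h.y_sq + 2 * a * z * hxy +
    a * (2 * b + a * b * r - b ^ 2 - 1 + a * r) * h.z_sq ha hx

theorem hurwitzMinor_mul_eq (h : IsEquilibrium_s11 (-a * r) a b r x y z) (ha : a ≠ 0) (hr : r ≠ 0)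
    (hx : x ≠ 0) :
    hurwitzMinor a b r x y z * (r * (1 - a * r) - z * (1 + a * r)) =
      b * r * (b * ((a * r + 1) ^ 2 - 4 * a * r ^ 2) -
        (4 * a * (r - 1) * (a * r + 1) * z + (a * r - 1) ^ 3)) := by
  rw [h.hurwitzMinor_eq ha hr hx]
  linear_combination (-b * (b + 1 - a * r) * (1 + a * r) ^ 2) * h.z_sq ha hx

end Domain

theorem hurwitzMinor_pos_iff {a b r x y z : ℝ} (h : IsEquilibrium_s11 (-a * r) a b r x y z)
    (ha : a < 0) (hb : 0 < b) (hr : 1 < r) (hz : 0 < z) :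
    0 < hurwitzMinor a b r x y z ↔ criticalB a r < b := by
  have hr₀ : 0 < r := by linarith
  have hx : x ≠ 0 := by
    rintro rfl
    exact (mul_pos hb hz).ne' (by linear_combination -h.dz_eq_zero)
  have hz_sq := h.z_sq ha.ne hx
  have hz_eq : √(r * (r - 1)) = z := by rw [← hz_sq, Real.sqrt_sq hz.le]
  have hzr : z < r := by nlinarith
  have hconj : 0 < r * (1 - a * r) - z * (1 + a * r) := by
    have := mul_pos (mul_pos (neg_pos.2 ha) hr₀) (add_pos hr₀ hz)
    linarith
  have hden : 0 < (a * r + 1) ^ 2 - 4 * a * r ^ 2 := by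
    have := mul_pos (neg_pos.2 ha) (pow_pos hr₀ 2)
    linarith [sq_nonneg (a * r + 1)]
  rw [← mul_pos_iff_of_pos_right hconj, h.hurwitzMinor_mul_eq ha.ne hr₀.ne' hx,
    mul_pos_iff_of_pos_left (mul_pos hb hr₀), sub_pos, criticalB, hz_eq, div_lt_iff₀ hden]

end IsEquilibrium_s11

end GeneralizedLorenz

open GeneralizedLorenz

theorem hurwitz_minor_pos_of_cond_ii_general
    (a b r σ ξ x₁ y₁ z₁ : ℝ) (ha : a < 0) (hb : 0 < b) (hr : 1 < r) (hσ : σ = -a * r)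
    (hξ : ξ = (σ * b / (2 * a ^ 2)) *
      (a * (r - 2) - σ + Real.sqrt ((σ - a * r) ^ 2 + 4 * a * σ)))
    (hx₁ : x₁ = σ * b * Real.sqrt ξ / (σ * b + a * ξ))
    (hy₁ : y₁ = Real.sqrt ξ)
    (hz₁ : z₁ = σ * ξ / (σ * b + a * ξ)) :
    0 < (b - a * r + 1) *
        (x₁ ^ 2 + a * y₁ ^ 2 - a * z₁ ^ 2 - a * r * (b - r + 1) + b) -
        (-a * (2 * x₁ * y₁ * z₁ + r * x₁ ^ 2 - y₁ ^ 2 + b * z₁ ^ 2 - b * r * (r - 1))) ↔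
      (4 * a * (r - 1) * (a * r + 1) * Real.sqrt (r * (r - 1)) + (a * r - 1) ^ 3) /
        ((a * r + 1) ^ 2 - 4 * a * r ^ 2) < b := by
  have hσ_pos : 0 < σ := hσ ▸ mul_pos (neg_pos.2 ha) (by linarith)
  obtain rfl : ξ = xi σ a b r := hξ
  have hequil : IsEquilibrium_s11 σ a b r x₁ y₁ z₁ := by
    simpa only [hx₁, hy₁, hz₁] using isEquilibrium_sqrt_xi hσ_pos ha hb hr
  have hz_pos : 0 < z₁ := hz₁ ▸ div_pos (mul_pos hσ_pos (xi_pos hσ_pos ha.ne hb hr))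
    (add_mul_xi_pos hσ_pos ha hb (by linarith))
  exact (hσ ▸ hequil).hurwitzMinor_pos_iff ha hb hr hz_pos

/-- condition (ii) implies p₁·p₂ − p₃ > 0 at S₊. -/
theorem hurwitz_minor_pos_of_cond_ii
    (a b r σ ξ x₁ y₁ z₁ : ℝ) (ha : a < 0) (hb : 0 < b) (hr : 1 < r) (hσ : σ = -a * r)
    (hξ : ξ = (σ * b / (2 * a ^ 2)) *
      (a * (r - 2) - σ + Real.sqrt ((σ - a * r) ^ 2 + 4 * a * σ)))
    (hx₁ : x₁ = σ * b * Real.sqrt ξ / (σ * b + a * ξ))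
    (hy₁ : y₁ = Real.sqrt ξ)
    (hz₁ : z₁ = σ * ξ / (σ * b + a * ξ))
    (har : a * r + 1 < 0)
    (hbcr : b > (4 * a * (r - 1) * (a * r + 1) * Real.sqrt (r * (r - 1)) + (a * r - 1) ^ 3) /
        ((a * r + 1) ^ 2 - 4 * a * r ^ 2)) :
    0 < (b - a * r + 1) *
        (x₁ ^ 2 + a * y₁ ^ 2 - a * z₁ ^ 2 - a * r * (b - r + 1) + b) -
        (-a * (2 * x₁ * y₁ * z₁ + r * x₁ ^ 2 - y₁ ^ 2 + b * z₁ ^ 2 - b * r * (r - 1))) :=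
  (hurwitz_minor_pos_of_cond_ii_general a b r σ ξ x₁ y₁ z₁ ha hb hr hσ hξ hx₁ hy₁ hz₁).2 hbcr
end

section
/- (Lemma on stability, case (i)) Let a < 0, b > 0, r > 1, σ = −a·r, ξ = (σ·b/(2·a²))·(a·(r − 2) − σ + √((σ − a·r)² + 4·a·σ)), x₁ = σ·b·√ξ/(σ·b + a·ξ), y₁ = √ξ, z₁ = σ·ξ/(σ·b + a·ξ). If 0 ≤ a·r + 1 < 2·r/(r − √(r·(r − 1))), then every complex root λ of the cubic polynomial λ³ + p₁·λ² + p₂(x₁, y₁, z₁)·λ + p₃(x₁, y₁, z₁) has negative real part (i.e. the equilibria S₊ = (x₁, y₁, z₁) and S₋ = (−x₁, −y₁, z₁) are linearly asymptotically stable), where p₁ = b − a·r + 1, p₂(x, y, z) = x² + a·y² − a·z² − a·r·(b − r + 1) + b, p₃(x, y, z) = −a·(2·x·y·z + r·x² − y² + b·z² − b·r·(r − 1)). -/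
/-!
When `x ≠ 0` and `σ = -a r`, the vanishing of the vector field at `(x, y, z)` forces
`z² = r (r - 1)` and, as `b > 0` and `r > 1`, also `r - 1 < z < r`. It turns the coefficients of
the characteristic polynomial into `p₂ = b (r + z - a r (r - z))` and `p₃ = 4 (-a r) b (r - 1)`.
With `A = -a r ∈ (0, 1]`, the Routh–Hurwitz inequality `p₃ < p₁ p₂` is `b > 0` times the product of
`2 A < b + A + 1` and `2 (r - 1) < r + z + A (r - z)`.
-/

theorem re_neg_of_cubic_eq_zero {p q c : ℝ} (hp : 0 < p) (hc : 0 < c) (hpq : c < p * q) {lam : ℂ}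
    (hlam : lam ^ 3 + (p : ℂ) * lam ^ 2 + (q : ℂ) * lam + (c : ℂ) = 0) : lam.re < 0 := by
  obtain ⟨u, v⟩ := lam
  have hq : 0 < q := pos_of_mul_pos_right (hc.trans hpq) hp.le
  have hre : u ^ 3 - 3 * u * v ^ 2 + p * (u ^ 2 - v ^ 2) + q * u + c = 0 := by
    have h := congrArg Complex.re hlam
    simp only [pow_succ, pow_zero, one_mul, Complex.add_re, Complex.mul_re, Complex.mul_im,
      Complex.ofReal_re, Complex.ofReal_im, zero_mul, sub_zero, Complex.zero_re] at h
    linear_combination h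
  have him : v * (3 * u ^ 2 - v ^ 2 + 2 * p * u + q) = 0 := by
    have h := congrArg Complex.im hlam
    simp only [pow_succ, pow_zero, one_mul, Complex.add_im, Complex.mul_im, Complex.mul_re,
      Complex.ofReal_re, Complex.ofReal_im, zero_mul, add_zero, Complex.zero_im] at h
    linear_combination h
  change u < 0
  by_contra! hu
  rcases mul_eq_zero.mp him with rfl | hv
  · have hpos : 0 < u ^ 3 + p * u ^ 2 + q * u + c := by positivity
    linarith
  · -- The imaginary part gives `v²` in terms of `u`; insert this into the real part.
    have heliminate : 8 * u ^ 3 + 8 * p * u ^ 2 + 2 * (p ^ 2 + q) * u + (p * q - c) = 0 := by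
      linear_combination (-1) * hre + (3 * u + p) * hv
    have hnonneg : 0 ≤ 8 * u ^ 3 + 8 * p * u ^ 2 + 2 * (p ^ 2 + q) * u := by positivity
    linarith

/-- Equilibria of the Rabinovich system: the three fields say that `ẋ`, `ẏ` and `ż` vanish. -/
structure IsRabinovichEquilibrium_s12 (σ a b r x y z : ℝ) : Prop where
  xdot_eq_zero : -σ * (x - y) - a * y * z = 0
  ydot_eq_zero : r * x - y - x * z = 0
  zdot_eq_zero : -b * z + x * y = 0

/-- The number `ξ` of the paper, the common value of `y²` at the equilibria `S₊` and `S₋`;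
meaningful when the expression under the root is nonnegative, as `Real.sqrt` is `0` otherwise. -/
noncomputable def rabinovichXi (σ a b r : ℝ) : ℝ :=
  (σ * b / (2 * a ^ 2)) * (a * (r - 2) - σ + Real.sqrt ((σ - a * r) ^ 2 + 4 * a * σ))

section Existence

variable {σ a b r : ℝ}

theorem sq_lt_rabinovich_discriminant (ha : a ≠ 0) (hr : 1 < r) :
    (a * (r - 2) - σ) ^ 2 < (σ - a * r) ^ 2 + 4 * a * σ := by
  have hgap : 0 < 4 * a ^ 2 * (r - 1) := mul_pos (by positivity) (sub_pos.mpr hr)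
  linear_combination hgap

theorem rabinovichXi_pos (ha : a ≠ 0) (hr : 1 < r) (hσb : 0 < σ * b) :
    0 < rabinovichXi σ a b r := by
  have hroot : -(a * (r - 2) - σ) < Real.sqrt ((σ - a * r) ^ 2 + 4 * a * σ) :=
    Real.lt_sqrt_of_sq_lt (by rw [neg_sq]; exact sq_lt_rabinovich_discriminant ha hr)
  exact mul_pos (by positivity) (by linarith)

theorem rabinovichXi_quadratic (ha : a ≠ 0) (hdisc : 0 ≤ (σ - a * r) ^ 2 + 4 * a * σ) :
    (σ * b + a * rabinovichXi σ a b r) ^ 2 + σ ^ 2 * b * rabinovichXi σ a b r =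
      r * σ * b * (σ * b + a * rabinovichXi σ a b r) := by
  have hw := Real.sq_sqrt hdisc
  rw [rabinovichXi]
  generalize Real.sqrt ((σ - a * r) ^ 2 + 4 * a * σ) = w at hw ⊢
  field_simp
  linear_combination σ ^ 2 * b ^ 2 * hw

theorem isRabinovichEquilibrium_of_quadratic {ξ y : ℝ} (hσ : σ ≠ 0) (hb : b ≠ 0)
    (hξ : (σ * b + a * ξ) ^ 2 + σ ^ 2 * b * ξ = r * σ * b * (σ * b + a * ξ)) (hy : y ^ 2 = ξ) :
    IsRabinovichEquilibrium_s12 σ a b r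
      (σ * b * y / (σ * b + a * ξ)) y (σ * ξ / (σ * b + a * ξ)) := by
  have hD : σ * b + a * ξ ≠ 0 := by
    intro hD
    have hzero : σ * (σ * b) ^ 2 = 0 := by
      linear_combination (σ ^ 2 * b - a * r * σ * b + a * (σ * b + a * ξ)) * hD - a * hξ
    exact mul_ne_zero hσ (pow_ne_zero 2 (mul_ne_zero hσ hb)) hzero
  constructor
  · field_simp
    ring
  · field_simp
    linear_combination (-y) * hξ
  · rw [← hy]
    ring

end Existence

namespace IsRabinovichEquilibrium_s12

variable {a b r x y z : ℝ}

theorem z_sq (h : IsRabinovichEquilibrium_s12 (-a * r) a b r x y z) (ha : a ≠ 0) (hx : x ≠ 0) :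
    z ^ 2 = r * (r - 1) := by
  refine mul_left_cancel₀ (mul_ne_zero ha hx) ?_
  linear_combination h.xdot_eq_zero - a * (r + z) * h.ydot_eq_zero

theorem x_sq (h : IsRabinovichEquilibrium_s12 (-a * r) a b r x y z) (ha : a ≠ 0) (hr : r ≠ 0)
    (hx : x ≠ 0) : x ^ 2 = b * (z + r - 1) := by
  refine mul_left_cancel₀ hr ?_
  linear_combination (r + z) * (h.zdot_eq_zero + x * h.ydot_eq_zero) +
    (b + x ^ 2) * h.z_sq ha hx

theorem y_sq {σ : ℝ} (h : IsRabinovichEquilibrium_s12 σ a b r x y z) : y ^ 2 = b * z * (r - z) := by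
  linear_combination (r - z) * h.zdot_eq_zero - y * h.ydot_eq_zero

theorem charpoly_coeff_one (h : IsRabinovichEquilibrium_s12 (-a * r) a b r x y z) (ha : a ≠ 0)
    (hr : r ≠ 0) (hx : x ≠ 0) :
    x ^ 2 + a * y ^ 2 - a * z ^ 2 - a * r * (b - r + 1) + b =
      b * (r + z - a * r * (r - z)) := by
  linear_combination h.x_sq ha hr hx + a * h.y_sq - (a * b + a) * h.z_sq ha hx

theorem charpoly_coeff_zero (h : IsRabinovichEquilibrium_s12 (-a * r) a b r x y z) (ha : a ≠ 0)
    (hr : r ≠ 0) (hx : x ≠ 0) :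
    -a * (2 * x * y * z + r * x ^ 2 - y ^ 2 + b * z ^ 2 - b * r * (r - 1)) =
      4 * (-a * r) * b * (r - 1) := by
  linear_combination (-2 * a * z) * h.zdot_eq_zero - a * r * h.x_sq ha hr hx + a * h.y_sq -
    4 * a * b * h.z_sq ha hx

theorem z_lt (h : IsRabinovichEquilibrium_s12 (-a * r) a b r x y z) (ha : a ≠ 0) (hr : 0 < r)
    (hx : x ≠ 0) : z < r :=
  lt_of_pow_lt_pow_left₀ 2 hr.le (by linarith [h.z_sq ha hx])

theorem sub_one_lt_z (h : IsRabinovichEquilibrium_s12 (-a * r) a b r x y z) (ha : a ≠ 0) (hb : 0 < b)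
    (hr : 1 < r) (hx : x ≠ 0) : r - 1 < z := by
  have hr0 : r ≠ 0 := (zero_lt_one.trans hr).ne'
  have hbsum : 0 < b * (z + r - 1) := h.x_sq ha hr0 hx ▸ sq_pos_of_ne_zero hx
  have hsum : 0 < z + r - 1 := pos_of_mul_pos_right hbsum hb.le
  have hprod : 0 < (z - (r - 1)) * (z + r - 1) := by linear_combination hr - h.z_sq ha hx
  exact sub_pos.mp (pos_of_mul_pos_left hprod hsum.le)

theorem re_neg_of_charpoly_root (h : IsRabinovichEquilibrium_s12 (-a * r) a b r x y z) (ha : a < 0)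
    (hb : 0 < b) (hr : 1 < r) (hx : x ≠ 0)
    (hRH : 4 * (-a * r) * (r - 1) < (b - a * r + 1) * (r + z - a * r * (r - z))) {lam : ℂ}
    (hlam : lam ^ 3 + ((b - a * r + 1 : ℝ) : ℂ) * lam ^ 2 +
        ((x ^ 2 + a * y ^ 2 - a * z ^ 2 - a * r * (b - r + 1) + b : ℝ) : ℂ) * lam +
        ((-a * (2 * x * y * z + r * x ^ 2 - y ^ 2 + b * z ^ 2 - b * r * (r - 1)) : ℝ) : ℂ)
        = 0) : lam.re < 0 := by
  have hr0 : 0 < r := zero_lt_one.trans hr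
  have hA : 0 < -a * r := mul_pos (neg_pos.mpr ha) hr0
  have hr1 : 0 < r - 1 := sub_pos.mpr hr
  rw [h.charpoly_coeff_one ha.ne hr0.ne' hx, h.charpoly_coeff_zero ha.ne hr0.ne' hx] at hlam
  refine re_neg_of_cubic_eq_zero (by linarith) (by positivity) ?_ hlam
  calc 4 * (-a * r) * b * (r - 1) = b * (4 * (-a * r) * (r - 1)) := by ring
    _ < b * ((b - a * r + 1) * (r + z - a * r * (r - z))) := mul_lt_mul_of_pos_left hRH hb
    _ = (b - a * r + 1) * (b * (r + z - a * r * (r - z))) := by ring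

theorem routh_hurwitz_inequality (h : IsRabinovichEquilibrium_s12 (-a * r) a b r x y z) (ha : a < 0)
    (hb : 0 < b) (hr : 1 < r) (hx : x ≠ 0) (har : 0 ≤ a * r + 1) :
    4 * (-a * r) * (r - 1) < (b - a * r + 1) * (r + z - a * r * (r - z)) := by
  have hr0 : 0 < r := zero_lt_one.trans hr
  have hA : 0 < -a * r := mul_pos (neg_pos.mpr ha) hr0
  have hAz : 0 < -a * r * (r - z) := mul_pos hA (sub_pos.mpr (h.z_lt ha.ne hr0 hx))
  have hz : r - 1 < z := h.sub_one_lt_z ha.ne hb hr hx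
  calc 4 * (-a * r) * (r - 1) = 2 * (-a * r) * (2 * (r - 1)) := by ring
    _ < (b - a * r + 1) * (r + z - a * r * (r - z)) :=
      mul_lt_mul'' (by linarith) (by linarith) (by linarith) (by linarith)

end IsRabinovichEquilibrium_s12

/-- Lemma on stability, case (i): under condition (i), every complex root
of the characteristic polynomial at S₊ (which coincides with the one at S₋) has
negative real part. -/
theorem stability_case_i
    (a b r σ ξ x₁ y₁ z₁ : ℝ) (ha : a < 0) (hb : 0 < b) (hr : 1 < r) (hσ : σ = -a * r)
    (hξ : ξ = (σ * b / (2 * a ^ 2)) *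
      (a * (r - 2) - σ + Real.sqrt ((σ - a * r) ^ 2 + 4 * a * σ)))
    (hx₁ : x₁ = σ * b * Real.sqrt ξ / (σ * b + a * ξ))
    (hy₁ : y₁ = Real.sqrt ξ)
    (hz₁ : z₁ = σ * ξ / (σ * b + a * ξ))
    (har0 : 0 ≤ a * r + 1)
    (har1 : a * r + 1 < 2 * r / (r - Real.sqrt (r * (r - 1)))) :
    ∀ lam : ℂ,
      lam ^ 3 + ((b - a * r + 1 : ℝ) : ℂ) * lam ^ 2 +
        ((x₁ ^ 2 + a * y₁ ^ 2 - a * z₁ ^ 2 - a * r * (b - r + 1) + b : ℝ) : ℂ) * lam +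
        ((-a * (2 * x₁ * y₁ * z₁ + r * x₁ ^ 2 - y₁ ^ 2 + b * z₁ ^ 2 - b * r * (r - 1)) : ℝ) : ℂ)
        = 0 → lam.re < 0 := by
  intro lam hlam
  have hσ0 : 0 < σ := hσ ▸ mul_pos (neg_pos.mpr ha) (by linarith)
  have hξ0 : 0 < ξ := hξ ▸ rabinovichXi_pos ha.ne hr (mul_pos hσ0 hb)
  have hquad : (σ * b + a * ξ) ^ 2 + σ ^ 2 * b * ξ = r * σ * b * (σ * b + a * ξ) :=
    hξ ▸ rabinovichXi_quadratic ha.ne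
      ((sq_nonneg _).trans (sq_lt_rabinovich_discriminant ha.ne hr).le)
  have hS : IsRabinovichEquilibrium_s12 σ a b r x₁ y₁ z₁ := by
    rw [hx₁, hy₁, hz₁]
    exact isRabinovichEquilibrium_of_quadratic hσ0.ne' hb.ne' hquad (Real.sq_sqrt hξ0.le)
  have hx₁0 : x₁ ≠ 0 := by
    rintro rfl
    have hy₁0 : y₁ = 0 := by linear_combination -hS.ydot_eq_zero
    exact (Real.sqrt_pos.mpr hξ0).ne' (hy₁ ▸ hy₁0)
  rw [hσ] at hS
  exact hS.re_neg_of_charpoly_root ha hb hr hx₁0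
    (hS.routh_hurwitz_inequality ha hb hr hx₁0 har0) hlam
end

section
/- Let a < 0, b > 0, 0 < r < 1 and σ = −a·r. Then every complex root λ of the cubic polynomial λ³ + p₁·λ² + p₂(0,0,0)·λ + p₃(0,0,0), i.e. the characteristic polynomial of the Jacobian of the generalized Lorenz system at the zero equilibrium S₀ = (0,0,0), has negative real part, where p₁ = b − a·r + 1, p₂(0,0,0) = −a·r·(b − r + 1) + b, p₃(0,0,0) = a·b·r·(r − 1). -/
theorem re_neg_of_sq_add_mul_add_eq_zero {p q : ℝ} (hp : 0 < p) (hq : 0 < q) {z : ℂ}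
    (hz : z ^ 2 + p * z + q = 0) : z.re < 0 := by
  have hz0 : z ≠ 0 := by
    rintro rfl
    exact hq.ne' (by simpa using hz)
  have hnorm : 0 < Complex.normSq z := Complex.normSq_pos.mpr hz0
  -- The real part of the equation multiplied by the conjugate of `z`.
  have hre : z.re * (Complex.normSq z + q) = -(p * Complex.normSq z) := by
    have hconj := congrArg (fun w ↦ (starRingEnd ℂ z * w).re) hz
    simp only [pow_two, Complex.mul_re, Complex.mul_im, Complex.add_re, Complex.add_im,
      Complex.conj_re, Complex.conj_im, Complex.ofReal_re, Complex.ofReal_im, mul_zero,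
      Complex.zero_re] at hconj
    rw [Complex.normSq_apply]
    linear_combination hconj
  have hprod : z.re * (Complex.normSq z + q) < 0 := hre ▸ neg_neg_of_pos (mul_pos hp hnorm)
  exact neg_of_mul_neg_left hprod (add_pos hnorm hq).le

-- At `S₀` the `z`-equation decouples, with eigenvalue `-b`; the quadratic factor is the
-- characteristic polynomial of the remaining `(x, y)`-block.
theorem S0_charpoly_eq_mul {R : Type*} [CommRing R] (a b r x : R) :
    x ^ 3 + (b - a * r + 1) * x ^ 2 + (-a * r * (b - r + 1) + b) * x + a * b * r * (r - 1) =
      (x + b) * (x ^ 2 + (1 - a * r) * x + a * r * (r - 1)) := by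
  ring

theorem S0_stable_of_r_lt_one_general {a b r : ℝ} (hb : 0 < b) (htrace : 0 < 1 - a * r)
    (hdet : 0 < a * r * (r - 1)) {lam : ℂ}
    (hlam : lam ^ 3 + ((b - a * r + 1 : ℝ) : ℂ) * lam ^ 2 +
      ((-a * r * (b - r + 1) + b : ℝ) : ℂ) * lam + ((a * b * r * (r - 1) : ℝ) : ℂ) = 0) :
    lam.re < 0 := by
  push_cast at hlam
  rw [S0_charpoly_eq_mul] at hlam
  rcases mul_eq_zero.mp hlam with hlinear | hquadratic
  · rw [eq_neg_of_add_eq_zero_left hlinear]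
    simpa using hb
  · exact re_neg_of_sq_add_mul_add_eq_zero htrace hdet (by exact_mod_cast hquadratic)

/-- for 0 < r < 1 every complex root of the characteristic polynomial
at S₀ has negative real part. -/
theorem S0_stable_of_r_lt_one
    (a b r σ : ℝ) (ha : a < 0) (hb : 0 < b) (hr0 : 0 < r) (hr1 : r < 1) (hσ : σ = -a * r) :
    ∀ lam : ℂ,
      lam ^ 3 + ((b - a * r + 1 : ℝ) : ℂ) * lam ^ 2 +
        ((-a * r * (b - r + 1) + b : ℝ) : ℂ) * lam +
        ((a * b * r * (r - 1) : ℝ) : ℂ) = 0 → lam.re < 0 := by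
  have har : a * r < 0 := mul_neg_of_neg_of_pos ha hr0
  exact fun _ ↦ S0_stable_of_r_lt_one_general hb (by linarith)
    (mul_pos_of_neg_of_neg har (sub_neg.mpr hr1))
end

section
/- (Perpetual point equations) Let a < 0, b > 0, r > 0, σ = −a·r, and let f(x, y, z) = (−σ(x − y) − a·y·z, r·x − y − x·z, −b·z + x·y) be the generalized Lorenz vector field with Jacobian matrix J(x, y, z). Suppose (x, y, z) ∈ ℝ³ is a perpetual point, i.e. J(x, y, z)·f(x, y, z) = 0 while f(x, y, z) ≠ 0, and suppose x² + a·y² − b² ≠ 0. Then the following three equations hold: (x² − a·z² + a·r² − 1)·(−y² + z² + r²·(a − 1)) = r²·(a·r − 1)² − z²·(a·r − b − 1)²; 2·x·y·z + r·x² − y² + b·z² − b·r·(r − 1) = 0; and z = (r·x² + (a·r − b − 1)·x·y − a·r·y²)/(x² + a·y² − b²). -/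
/-!
The first two components of the acceleration `J f` have the form `x p - y q` and `x s - y t` with
`p`, `q`, `s`, `t` polynomials in `(x, y, z)`. Both vanish at a perpetual point, and there `(x, y)`
is nonzero, because on the `z`-axis `f = (0, 0, -b z)` and `J f = (0, 0, b ^ 2 z)` vanish together;
hence `p t = q s`, which is the first equation. The second is `det J = 0`, since `f` is a nonzero
vector in the kernel of `J`. The third is the vanishing of the last component of `J f`, which is
affine in `z` for fixed `x` and `y`. Setting `σ = -a r` makes the first two equations divisible
by `a`.
-/

theorem mul_eq_mul_of_ne_zero_or_ne_zero {R : Type*} [CommRing R] [NoZeroDivisors R]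
    {p q s t x y : R} (hxy : x ≠ 0 ∨ y ≠ 0) (h₁ : x * p = y * q) (h₂ : x * s = y * t) :
    p * t = q * s := by
  rcases hxy with hx | hy
  · apply mul_left_cancel₀ hx
    linear_combination t * h₁ - q * h₂
  · apply mul_left_cancel₀ hy
    linear_combination s * h₁ - p * h₂

namespace GeneralizedLorenz

section CommRing

variable {R : Type*} [CommRing R] (σ a r b x y z : R)

/-- The vector field `f` of the generalized Lorenz system at `(x, y, z)`, with `σ` not yet tied to
`a` and `r`; the Rabinovich system is the case `σ = -a * r`. -/
def velocity : Fin 3 → R :=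
  ![-σ * (x - y) - a * y * z, r * x - y - x * z, -b * z + x * y]

/-- The Jacobian matrix of `velocity` at `(x, y, z)`, given by its entries so that it makes sense
over any commutative ring. -/
def jacobian : Matrix (Fin 3) (Fin 3) R :=
  !![-σ, σ - a * z, -a * y; r - z, -1, -x; y, x, -b]

/-- A perpetual point: the acceleration `J f` vanishes at `(x, y, z)` but the velocity `f` does
not. -/
structure IsPerpetualPoint : Prop where
  acceleration_eq_zero : (jacobian σ a r b x y z).mulVec (velocity σ a r b x y z) = 0
  velocity_ne_zero : velocity σ a r b x y z ≠ 0

theorem jacobian_mulVec_velocity :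
    (jacobian σ a r b x y z).mulVec (velocity σ a r b x y z) =
      ![x * (σ ^ 2 + (σ - a * z) * (r - z) - a * y ^ 2) -
          y * (σ * (σ + 1) - a * z * (σ + b + 1)),
        x * (z * (σ + b + 1) - r * (σ + 1)) - y * (x ^ 2 - 1 - (σ - a * z) * (r - z)),
        r * x ^ 2 - (σ + b + 1) * x * y + σ * y ^ 2 - z * (x ^ 2 + a * y ^ 2 - b ^ 2)] := by
  simp only [jacobian, velocity, Matrix.cons_mulVec, Matrix.empty_mulVec, Matrix.vec3_dotProduct']
  congrm ![?_, ?_, ?_] <;> ring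

theorem jacobian_mulVec_velocity_eq_zero_iff :
    (jacobian σ a r b x y z).mulVec (velocity σ a r b x y z) = 0 ↔
      x * (σ ^ 2 + (σ - a * z) * (r - z) - a * y ^ 2) =
        y * (σ * (σ + 1) - a * z * (σ + b + 1)) ∧
      x * (z * (σ + b + 1) - r * (σ + 1)) = y * (x ^ 2 - 1 - (σ - a * z) * (r - z)) ∧
      r * x ^ 2 - (σ + b + 1) * x * y + σ * y ^ 2 = z * (x ^ 2 + a * y ^ 2 - b ^ 2) := by
  simp [jacobian_mulVec_velocity, sub_eq_zero]

theorem det_jacobian :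
    (jacobian σ a r b x y z).det =
      b * ((σ - a * z) * (r - z)) - σ * (x ^ 2 + b) - (σ + a * r - 2 * a * z) * x * y -
        a * y ^ 2 := by
  rw [jacobian, Matrix.det_fin_three]
  simp only [Matrix.of_apply, Matrix.cons_val]
  ring

end CommRing

namespace IsPerpetualPoint

variable {R : Type*} [CommRing R] {σ a r b x y z : R}

theorem x_ne_zero_or_y_ne_zero [NoZeroDivisors R] (h : IsPerpetualPoint σ a r b x y z) :
    x ≠ 0 ∨ y ≠ 0 := by
  by_contra! hxy
  obtain ⟨rfl, rfl⟩ := hxy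
  obtain ⟨-, -, h₃⟩ := (jacobian_mulVec_velocity_eq_zero_iff ..).1 h.acceleration_eq_zero
  have hbz : b = 0 ∨ z = 0 := by simpa [or_comm] using h₃
  apply h.velocity_ne_zero
  simpa [velocity] using hbz

theorem det_jacobian_eq_zero [IsDomain R] (h : IsPerpetualPoint σ a r b x y z) :
    (jacobian σ a r b x y z).det = 0 :=
  Matrix.exists_mulVec_eq_zero_iff.1 ⟨_, h.velocity_ne_zero, h.acceleration_eq_zero⟩

end IsPerpetualPoint

end GeneralizedLorenz

open GeneralizedLorenz in
theorem perpetual_point_equations_general {R : Type*} [CommRing R] [IsDomain R]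
    {a b r σ x y z : R} (ha : a ≠ 0) (hσ : σ = -a * r) (h : IsPerpetualPoint σ a r b x y z) :
    (x ^ 2 - a * z ^ 2 + a * r ^ 2 - 1) * (-y ^ 2 + z ^ 2 + r ^ 2 * (a - 1)) =
        r ^ 2 * (a * r - 1) ^ 2 - z ^ 2 * (a * r - b - 1) ^ 2 ∧
    2 * x * y * z + r * x ^ 2 - y ^ 2 + b * z ^ 2 - b * r * (r - 1) = 0 ∧
    z * (x ^ 2 + a * y ^ 2 - b ^ 2) = r * x ^ 2 + (a * r - b - 1) * x * y - a * r * y ^ 2 := by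
  obtain ⟨h₁, h₂, h₃⟩ := (jacobian_mulVec_velocity_eq_zero_iff ..).1 h.acceleration_eq_zero
  have hcross := mul_eq_mul_of_ne_zero_or_ne_zero h.x_ne_zero_or_y_ne_zero h₁ h₂
  have hdet := h.det_jacobian_eq_zero
  rw [det_jacobian] at hdet
  subst hσ
  refine ⟨mul_left_cancel₀ ha ?_, mul_left_cancel₀ ha ?_, ?_⟩
  · linear_combination hcross
  · linear_combination hdet
  · linear_combination -h₃

/-- equations satisfied by perpetual points of the Rabinovich system. -/
theorem perpetual_point_equations
    (a b r σ : ℝ) (ha : a < 0) (hb : 0 < b) (hr : 0 < r) (hσ : σ = -a * r)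
    (x y z : ℝ)
    (J : Matrix (Fin 3) (Fin 3) ℝ)
    (hJ : J = !![-σ, σ - a * z, -a * y; r - z, -1, -x; y, x, -b])
    (f : Fin 3 → ℝ)
    (hf : f = ![-σ * (x - y) - a * y * z, r * x - y - x * z, -b * z + x * y])
    (hpp : J.mulVec f = 0) (hf0 : f ≠ 0)
    (hden : x ^ 2 + a * y ^ 2 - b ^ 2 ≠ 0) :
    (x ^ 2 - a * z ^ 2 + a * r ^ 2 - 1) * (-y ^ 2 + z ^ 2 + r ^ 2 * (a - 1)) =
        r ^ 2 * (a * r - 1) ^ 2 - z ^ 2 * (a * r - b - 1) ^ 2 ∧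
    2 * x * y * z + r * x ^ 2 - y ^ 2 + b * z ^ 2 - b * r * (r - 1) = 0 ∧
    z = (r * x ^ 2 + (a * r - b - 1) * x * y - a * r * y ^ 2) /
        (x ^ 2 + a * y ^ 2 - b ^ 2) := by
  subst hJ hf
  obtain ⟨h₁, h₂, h₃⟩ := perpetual_point_equations_general ha.ne hσ ⟨hpp, hf0⟩
  exact ⟨h₁, h₂, (eq_div_iff hden).2 h₃⟩
end
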